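/- Unique ergodicity of cellular automata is undecidable: there is no total computable function g from codes (n, f) (of radius-1 cellular automata Φ_{n,f}) to Bool such that g(n,f) = true if and only if Φ_{n,f} is uniquely ergodic. -/

import Mathlib

open MeasureTheory

/-- The radius-1 cellular automaton induced by a local rule `f`. -/
def caOfRule {n : ℕ} (f : Fin (n + 1) × Fin (n + 1) × Fin (n + 1) → Fin (n + 1)) :
    (ℤ → Fin (n + 1)) → (ℤ → Fin (n + 1)) :=
  fun x i => f (x (i - 1), x i, x (i + 1))

/-!
For a rule with a spreading blank, unique ergodicity means that no configuration is immortal: if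
every orbit is eventually blank at each cell, then the Dirac mass at the blank configuration is the
only invariant measure, while an immortal configuration yields a second one by compactness and
Krylov–Bogolyubov.

The halting problem for a program with code `n` is a derivability problem: a fixed finite system of
Horn clauses over counter valuations `v` derives a fixed fact from some `v` with `v 0 = n` if and
only if the program halts. Counter `i` is read off an integer as its valuation at a prime `p i`.
A space-time diagram carries a left-moving, a resting and a right-moving track; the cell `x` holds
at time `t` the integers `X = 2(x + t) + 1`, `X + Y = 4x + 2` and `Y = 2(x - t) + 1`, of which the
states record two base-`p` digits and two digits of the unit part for each prime `p`, next to the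
facts derived at `X` and at `Y`. As any two cells of the moving tracks meet (up to parity), the
digits of sums leave no freedom: up to an affine change of coordinates, every valid diagram carries
the digits of the integers at each level of the hierarchy of multiples of powers of `p`. Hence a
valid diagram refutes derivability, and the integers themselves give one when the fact is not
derivable. The number `n` enters only through the counter of the first prime, stored explicitly up
to the cap `n + 1`, so that the rule is primitive recursive in `n`.
-/

namespace CellularAutomaton

section Ergodic

open Filter Topology BoundedContinuousFunction

variable {X : Type*} [MeasurableSpace X]

/-- The empirical measure of the first `N + 1` points of the orbit of `x` under `T`. -/
noncomputable def empiricalMeasure (T : X → X) (x : X) (N : ℕ) : ProbabilityMeasure X :=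
  ⟨((N + 1 : ℕ) : ENNReal)⁻¹ • ∑ k ∈ Finset.range (N + 1), Measure.dirac (T^[k] x), ⟨by
    simp only [Measure.smul_apply, Measure.coe_finsetSum, Finset.sum_apply, measure_univ,
      Finset.sum_const, Finset.card_range, smul_eq_mul, nsmul_eq_mul, mul_one]
    exact ENNReal.inv_mul_cancel (by simp) (ENNReal.natCast_ne_top _)⟩⟩

theorem empiricalMeasure_eq_one {T : X → X} {x : X} {F : Set X} (hF : MeasurableSet F)
    (hx : ∀ k, T^[k] x ∈ F) (N : ℕ) : (empiricalMeasure T x N : Measure X) F = 1 := by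
  rw [empiricalMeasure, ProbabilityMeasure.coe_mk]
  simp only [Measure.smul_apply, Measure.coe_finsetSum, Finset.sum_apply,
    Measure.dirac_apply' _ hF, Set.indicator_of_mem (hx _), Pi.one_apply, Finset.sum_const,
    Finset.card_range, nsmul_eq_mul, mul_one, smul_eq_mul]
  exact ENNReal.inv_mul_cancel (by simp) (ENNReal.natCast_ne_top _)

variable [TopologicalSpace X] [BorelSpace X]

theorem integral_empiricalMeasure (T : X → X) (x : X) (N : ℕ) (g : X →ᵇ ℝ) :
    ∫ y, g y ∂(empiricalMeasure T x N : Measure X) = birkhoffAverage ℝ T g (N + 1) x := by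
  rw [empiricalMeasure, ProbabilityMeasure.coe_mk, integral_smul_measure,
    integral_finsetSum_measure fun k _ ↦ g.integrable _]
  simp only [integral_dirac' _ _ g.continuous.measurable.stronglyMeasurable, birkhoffAverage,
    birkhoffSum, ENNReal.toReal_inv, ENNReal.toReal_natCast]

theorem eq_dirac_of_tendsto_iterate [HasOuterApproxClosed X] {T : X → X} {x₀ : X} {μ : Measure X}
    [IsProbabilityMeasure μ] (hμ : MeasurePreserving T μ μ)
    (hT : ∀ x, Tendsto (fun N ↦ T^[N] x) atTop (𝓝 x₀)) : μ = Measure.dirac x₀ := by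
  refine ext_of_forall_integral_eq_of_IsFiniteMeasure fun g ↦ ?_
  have hlim : Tendsto (fun N ↦ ∫ x, g (T^[N] x) ∂μ) atTop (𝓝 (∫ _, g x₀ ∂μ)) :=
    tendsto_integral_of_dominated_convergence (fun _ ↦ ‖g‖)
      (fun N ↦ (g.continuous.measurable.comp (hμ.iterate N).measurable).aestronglyMeasurable)
      (integrable_const _) (fun N ↦ ae_of_all _ fun x ↦ g.norm_coe_le_norm _)
      (ae_of_all _ fun x ↦ (g.continuous.tendsto x₀).comp (hT x))
  have hconst : ∀ N, ∫ x, g (T^[N] x) ∂μ = ∫ x, g x ∂μ := fun N ↦ by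
    conv_rhs => rw [← (hμ.iterate N).map_eq]
    exact (integral_map (hμ.iterate N).measurable.aemeasurable
      g.continuous.measurable.aestronglyMeasurable).symm
  simp only [hconst, integral_const, probReal_univ, one_smul] at hlim
  rw [integral_dirac' _ _ g.continuous.measurable.stronglyMeasurable]
  exact tendsto_nhds_unique tendsto_const_nhds hlim

theorem measurePreserving_of_tendsto_empiricalMeasure [HasOuterApproxClosed X] {T : X → X}
    (hT : Continuous T) {x : X} {L : Filter ℕ} [L.NeBot] (hL : L ≤ atTop)
    {ν : ProbabilityMeasure X} (hν : Tendsto (empiricalMeasure T x) L (𝓝 ν)) :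
    MeasurePreserving T (ν : Measure X) ν := by
  refine ⟨hT.measurable, ext_of_forall_integral_eq_of_IsFiniteMeasure fun g ↦ ?_⟩
  rw [integral_map hT.measurable.aemeasurable g.continuous.measurable.aestronglyMeasurable]
  have hlim := ProbabilityMeasure.tendsto_iff_forall_integral_tendsto.1 hν
  simp only [integral_empiricalMeasure] at hlim
  have hshift : ∀ N, birkhoffAverage ℝ T (g.compContinuous ⟨T, hT⟩) N x =
      birkhoffAverage ℝ T g N (T x) := fun N ↦ by
    simp only [birkhoffAverage, birkhoffSum, compContinuous_apply, ContinuousMap.coe_mk,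
      ← Function.iterate_succ_apply', Function.iterate_succ_apply]
  have hdiff : Tendsto (fun N ↦ birkhoffAverage ℝ T g (N + 1) (T x) -
      birkhoffAverage ℝ T g (N + 1) x) L (𝓝 0) :=
    ((tendsto_birkhoffAverage_apply_sub_birkhoffAverage' ℝ g.isBounded_range T x).comp
      (tendsto_add_atTop_nat 1)).mono_left hL
  have hlimT := hlim (g.compContinuous ⟨T, hT⟩)
  simp only [hshift] at hlimT
  exact sub_eq_zero.1 (tendsto_nhds_unique (hlimT.sub (hlim g)) hdiff)

/- Krylov–Bogolyubov: a cluster point of the empirical measures of the orbit. -/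
theorem exists_measurePreserving_of_orbit_subset [CompactSpace X] [T2Space X]
    [HasOuterApproxClosed X] {T : X → X} (hT : Continuous T) {F : Set X} (hF : IsClosed F) {x : X}
    (hx : ∀ k, T^[k] x ∈ F) :
    ∃ ν : Measure X, IsProbabilityMeasure ν ∧ MeasurePreserving T ν ν ∧ ν F = 1 := by
  obtain ⟨ν, -, hν⟩ := isCompact_univ.ultrafilter_le_nhds
    ((hyperfilter ℕ).map (empiricalMeasure T x)) (by simp)
  have hν' : Tendsto (empiricalMeasure T x) (hyperfilter ℕ) (𝓝 ν) := hν
  refine ⟨ν, inferInstance,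
    measurePreserving_of_tendsto_empiricalMeasure hT Nat.hyperfilter_le_atTop hν',
    le_antisymm prob_le_one ?_⟩
  simpa only [empiricalMeasure_eq_one hF.measurableSet hx, limsup_const] using
    ProbabilityMeasure.limsup_measure_closed_le_of_tendsto hν' hF

end Ergodic

section SpreadingBlank

open Filter Topology

variable {n : ℕ} {f : Fin (n + 1) × Fin (n + 1) × Fin (n + 1) → Fin (n + 1)}

theorem continuous_caOfRule (f : Fin (n + 1) × Fin (n + 1) × Fin (n + 1) → Fin (n + 1)) :
    Continuous (caOfRule f) :=
  continuous_pi fun i ↦ (continuous_of_discreteTopology (f := f)).comp (by fun_prop)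

/-- A local rule has a spreading blank if every neighbourhood containing the blank state `0`
is mapped to `0`. -/
def HasSpreadingBlank (f : Fin (n + 1) × Fin (n + 1) × Fin (n + 1) → Fin (n + 1)) : Prop :=
  ∀ l m r, l = 0 ∨ m = 0 ∨ r = 0 → f (l, m, r) = 0

/-- A configuration is immortal if no blank ever appears in its orbit. -/
def IsImmortal (f : Fin (n + 1) × Fin (n + 1) × Fin (n + 1) → Fin (n + 1))
    (x : ℤ → Fin (n + 1)) : Prop :=
  ∀ N i, (caOfRule f)^[N] x i ≠ 0

theorem HasSpreadingBlank.iterate_eq_zero (hf : HasSpreadingBlank f) {x : ℤ → Fin (n + 1)}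
    {T : ℕ} {j : ℤ} (hj : (caOfRule f)^[T] x j = 0) (s : ℕ) :
    ∀ k : ℤ, |k - j| ≤ s → (caOfRule f)^[T + s] x k = 0 := by
  induction s with
  | zero =>
    intro k hk
    obtain rfl : k = j := by simpa [sub_eq_zero] using hk
    exact hj
  | succ s ih =>
    intro k hk
    rw [← add_assoc, Function.iterate_succ_apply']
    rw [abs_le] at hk
    rcases lt_trichotomy k j with h | rfl | h
    · exact hf _ _ _ (.inr (.inr (ih _ (abs_le.2 (by omega)))))
    · exact hf _ _ _ (.inr (.inl (ih _ (by simp))))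
    · exact hf _ _ _ (.inl (ih _ (abs_le.2 (by omega))))

theorem HasSpreadingBlank.tendsto_iterate (hf : HasSpreadingBlank f)
    (h : ¬ ∃ x, IsImmortal f x) (x : ℤ → Fin (n + 1)) :
    Tendsto (fun N ↦ (caOfRule f)^[N] x) atTop (𝓝 0) := by
  simp only [IsImmortal, not_exists, not_forall, not_not] at h
  obtain ⟨T, j, hj⟩ := h x
  refine tendsto_pi_nhds.2 fun i ↦ tendsto_nhds_of_eventually_eq ?_
  filter_upwards [eventually_ge_atTop (T + (i - j).natAbs)] with N hN
  obtain ⟨s, rfl⟩ := Nat.exists_eq_add_of_le (le_of_add_le_left hN)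
  exact hf.iterate_eq_zero hj s i (by rw [Int.abs_eq_natAbs]; omega)

theorem isInvariant_iff_measurePreserving {μ : Measure (ℤ → Fin (n + 1))} :
    (∀ A, MeasurableSet A → μ (caOfRule f ⁻¹' A) = μ A) ↔ MeasurePreserving (caOfRule f) μ μ := by
  have hm := (continuous_caOfRule f).measurable
  refine ⟨fun h ↦ ⟨hm, Measure.ext fun A hA ↦ ?_⟩, fun h A hA ↦ ?_⟩
  · rw [Measure.map_apply hm hA, h A hA]
  · exact h.measure_preimage hA.nullMeasurableSet

theorem HasSpreadingBlank.uniquelyErgodic_iff (hf : HasSpreadingBlank f) :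
    (∃! μ : Measure (ℤ → Fin (n + 1)), IsProbabilityMeasure μ ∧
      ∀ A : Set (ℤ → Fin (n + 1)), MeasurableSet A → μ (caOfRule f ⁻¹' A) = μ A) ↔
    ¬ ∃ x, IsImmortal f x := by
  simp only [isInvariant_iff_measurePreserving]
  have hfix : caOfRule f 0 = 0 := funext fun _ ↦ hf _ _ _ (.inl rfl)
  have hdirac : MeasurePreserving (caOfRule f) (.dirac 0) (.dirac 0) :=
    ⟨(continuous_caOfRule f).measurable, by
      rw [Measure.map_dirac' (continuous_caOfRule f).measurable, hfix]⟩
  constructor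
  · rintro ⟨μ, -, hunique⟩ ⟨x, hx⟩
    have hclosed : IsClosed {y : ℤ → Fin (n + 1) | y 0 ≠ 0} :=
      (isClosed_discrete {0}ᶜ).preimage (continuous_apply (0 : ℤ))
    obtain ⟨ν, hprob, hν, hone⟩ := exists_measurePreserving_of_orbit_subset
      (continuous_caOfRule f) hclosed fun k ↦ hx k 0
    rw [hunique ν ⟨hprob, hν⟩, ← hunique _ ⟨inferInstance, hdirac⟩,
      Measure.dirac_apply' _ hclosed.measurableSet] at hone
    simp at hone
  · exact fun h ↦ ⟨_, ⟨inferInstance, hdirac⟩, fun μ ⟨_, hμ⟩ ↦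
      eq_dirac_of_tendsto_iterate hμ (hf.tendsto_iterate h)⟩

end SpreadingBlank

section Horn

open Function

/-- The elementary operations on a valuation `ℕ → ℕ` of counters: do nothing, increment a counter,
forget the value of a counter, or test a counter for zero. -/
inductive Action
  | stay
  | succ (i : ℕ)
  | forget (i : ℕ)
  | zero (i : ℕ)

/-- The transition relation of an action. -/
def Action.App : Action → (ℕ → ℕ) → (ℕ → ℕ) → Prop
  | .stay, v, w => w = v
  | .succ i, v, w => w = update v i (v i + 1)
  | .forget i, v, w => ∃ a, w = update v i a
  | .zero i, v, w => v i = 0 ∧ w = v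

/-- The action only concerns counters with index below `k`. -/
def Action.BoundedBy (k : ℕ) : Action → Prop
  | .stay => True
  | .succ i | .forget i | .zero i => i < k

theorem Action.BoundedBy.mono {k l : ℕ} (h : k ≤ l) {a : Action} (ha : a.BoundedBy k) :
    a.BoundedBy l := by
  cases a
  · trivial
  all_goals exact lt_of_lt_of_le ha h

theorem Action.exists_boundedBy (a : Action) : ∃ k, a.BoundedBy k := by
  cases a with
  | stay => exact ⟨0, trivial⟩
  | succ i | forget i | zero i => exact ⟨i + 1, Nat.lt_succ_self i⟩

/-- A Horn clause over the predicate symbols `Q`: if all symbols in `body` hold at a valuation `v`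
and `act` leads from `v` to `w`, then `head` holds at `w`. -/
structure Clause (Q : Type*) where
  body : Set Q
  act : Action
  head : Q

/-- Derivability of predicate symbols at valuations from a set of Horn clauses. -/
inductive Derivable {Q : Type*} (C : Set (Clause Q)) : Q → (ℕ → ℕ) → Prop
  | mk {c : Clause Q} {v w : ℕ → ℕ} (hc : c ∈ C) (hbody : ∀ b ∈ c.body, Derivable C b v)
      (hact : c.act.App v w) : Derivable C c.head w

/-- Predicates on valuations given by a symbol of a finite Horn system. -/
def HornDefinable (R : (ℕ → ℕ) → Prop) : Prop :=
  ∃ (Q : Type) (_ : Finite Q) (C : Set (Clause Q)) (k : ℕ) (P : Q),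
    (∀ c ∈ C, c.act.BoundedBy k) ∧ ∀ v, Derivable C P v ↔ R v

/-- Derivability from a family of Horn clauses, where the clause `c i` may only be applied at
valuations satisfying the guard `G i`. -/
inductive GuardedDerivable {ι N : Type*} (c : ι → Clause N) (G : ι → (ℕ → ℕ) → Prop) :
    N → (ℕ → ℕ) → Prop
  | mk (i : ι) {v w : ℕ → ℕ} (hG : G i v) (hbody : ∀ b ∈ (c i).body, GuardedDerivable c G b v)
      (hact : (c i).act.App v w) : GuardedDerivable c G (c i).head w

/-- Rename the predicate symbols of a clause. -/
def Clause.map {Q Q' : Type*} (g : Q → Q') (c : Clause Q) : Clause Q' :=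
  ⟨g '' c.body, c.act, g c.head⟩

theorem Derivable.map {Q Q' : Type*} {C : Set (Clause Q)} {C' : Set (Clause Q')} {g : Q → Q'}
    (hg : ∀ c ∈ C, c.map g ∈ C') {q : Q} {v : ℕ → ℕ} (h : Derivable C q v) :
    Derivable C' (g q) v := by
  induction h with
  | mk hc _ hact ih => exact .mk (hg _ hc) (Set.forall_mem_image.2 ih) hact

section UnfoldGuards

variable {ι N : Type} {Q : ι → Type}

/-- The Horn clauses obtained from guarded clauses `c i` by replacing the `i`-th guard with a
premise `P i`, itself axiomatised by the clauses `C i`. -/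
def unfoldGuards (c : ι → Clause N) (C : ∀ i, Set (Clause (Q i))) (P : ∀ i, Q i) :
    Set (Clause (N ⊕ Σ i, Q i)) :=
  (⋃ i, Clause.map (fun q ↦ .inr ⟨i, q⟩) '' C i) ∪
    Set.range fun i ↦ ⟨insert (.inr ⟨i, P i⟩) (.inl '' (c i).body), (c i).act, .inl (c i).head⟩

variable {c : ι → Clause N} {G : ι → (ℕ → ℕ) → Prop} {C : ∀ i, Set (Clause (Q i))} {P : ∀ i, Q i}

theorem Derivable.of_unfoldGuards (hP : ∀ i v, Derivable (C i) (P i) v ↔ G i v)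
    {x : N ⊕ Σ i, Q i} {v : ℕ → ℕ} (h : Derivable (unfoldGuards c C P) x v) :
    Sum.elim (fun n ↦ GuardedDerivable c G n v) (fun q ↦ Derivable (C q.1) q.2 v) x := by
  induction h with
  | mk hc _ hact ih =>
    rcases hc with hc | ⟨i, rfl⟩
    · obtain ⟨i, d, hd, rfl⟩ := Set.mem_iUnion.1 hc
      exact .mk hd (fun b hb ↦ ih _ (Set.mem_image_of_mem _ hb)) hact
    · exact .mk i ((hP i _).1 (ih _ (Set.mem_insert _ _)))
        (fun b hb ↦ ih _ (Set.mem_insert_of_mem _ (Set.mem_image_of_mem _ hb))) hact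

theorem GuardedDerivable.unfoldGuards (hP : ∀ i v, Derivable (C i) (P i) v ↔ G i v)
    {n : N} {v : ℕ → ℕ} (h : GuardedDerivable c G n v) :
    Derivable (unfoldGuards c C P) (.inl n) v := by
  induction h with
  | @mk i v w hG _ hact ih =>
    have hguard : Derivable (CellularAutomaton.unfoldGuards c C P) (.inr ⟨i, P i⟩) v := by
      let g (q : Q i) : N ⊕ Σ i, Q i := .inr ⟨i, q⟩
      refine Derivable.map (g := g) (fun d hd ↦ ?_) ((hP i v).2 hG)
      exact Set.mem_union_left _ (Set.mem_iUnion_of_mem i (Set.mem_image_of_mem _ hd))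
    exact .mk (C := CellularAutomaton.unfoldGuards c C P) (Set.mem_union_right _ ⟨i, rfl⟩)
      (Set.forall_mem_insert.2 ⟨hguard, Set.forall_mem_image.2 ih⟩) hact

end UnfoldGuards

namespace HornDefinable

variable {A B : (ℕ → ℕ) → Prop}

protected theorem guardedDerivable {ι N : Type} [Finite ι] [Finite N] {c : ι → Clause N}
    {G : ι → (ℕ → ℕ) → Prop} (hG : ∀ i, HornDefinable (G i)) (n : N) :
    HornDefinable (GuardedDerivable c G n) := by
  choose Q finQ C k P hk hP using hG
  choose m hm using fun i ↦ (c i).act.exists_boundedBy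
  obtain ⟨K, hK⟩ := (Set.finite_range fun i ↦ max (k i) (m i)).bddAbove
  have hK' (i : ι) : k i ≤ K ∧ m i ≤ K := max_le_iff.1 (hK ⟨i, rfl⟩)
  refine ⟨N ⊕ Σ i, Q i, inferInstance, unfoldGuards c C P, K, .inl n, ?_, fun v ↦
    ⟨Derivable.of_unfoldGuards hP, GuardedDerivable.unfoldGuards hP⟩⟩
  rintro d (hd | ⟨i, rfl⟩)
  · obtain ⟨i, e, he, rfl⟩ := Set.mem_iUnion.1 hd
    exact (hk i e he).mono (hK' i).1
  · exact (hm i).mono (hK' i).2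

theorem congr (hA : HornDefinable A) (h : ∀ v, A v ↔ B v) : HornDefinable B :=
  (funext fun v ↦ propext (h v) : A = B) ▸ hA

protected theorem true : HornDefinable fun _ ↦ True :=
  ⟨Unit, inferInstance, {⟨∅, .stay, ()⟩}, 0, (), by rintro _ rfl; trivial, fun v ↦
    iff_true_intro (.mk (c := ⟨∅, .stay, ()⟩) (v := v) rfl (by simp) rfl)⟩

theorem image (hA : HornDefinable A) (a : Action) :
    HornDefinable fun w ↦ ∃ v, A v ∧ a.App v w := by
  refine (HornDefinable.guardedDerivable (ι := Unit) (N := Unit) (c := fun _ ↦ ⟨∅, a, ()⟩)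
    (G := fun _ ↦ A) (fun _ ↦ hA) ()).congr fun w ↦ ⟨?_, ?_⟩
  · rintro ⟨_, hv, -, hact⟩
    exact ⟨_, hv, hact⟩
  · rintro ⟨v, hv, hact⟩
    exact .mk () hv (by simp) hact

protected theorem zero (i : ℕ) : HornDefinable fun v ↦ v i = 0 :=
  (HornDefinable.true.image (.zero i)).congr fun w ↦
    ⟨by rintro ⟨_, -, h, rfl⟩; exact h, fun h ↦ ⟨w, trivial, h, rfl⟩⟩

theorem exists_update (hA : HornDefinable A) (i : ℕ) :
    HornDefinable fun v ↦ ∃ a, A (update v i a) :=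
  (hA.image (.forget i)).congr fun w ↦
    ⟨by rintro ⟨v, hv, a, rfl⟩; exact ⟨v i, by simpa using hv⟩,
      fun ⟨a, ha⟩ ↦ ⟨_, ha, w i, by simp⟩⟩

protected theorem and (hA : HornDefinable A) (hB : HornDefinable B) :
    HornDefinable fun v ↦ A v ∧ B v := by
  refine (HornDefinable.guardedDerivable (ι := Bool) (N := Bool)
    (c := Bool.rec ⟨∅, .stay, false⟩ ⟨{false}, .stay, true⟩) (G := Bool.rec A B)
    (Bool.rec hA hB) true).congr fun w ↦ ⟨fun h ↦ ?_, fun ⟨hAw, hBw⟩ ↦ ?_⟩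
  · suffices ∀ q v, GuardedDerivable _ _ q v → A v ∧ (q = true → B v) from
      (this true w h).imp id fun h ↦ h rfl
    intro q v h
    induction h with
    | mk i hG _ hact ih =>
      cases i <;> obtain rfl := hact
      · exact ⟨hG, fun h ↦ nomatch h⟩
      · exact ⟨(ih false rfl).1, fun _ ↦ hG⟩
  · exact .mk (v := w) Bool.true hBw (by rintro _ rfl; exact .mk Bool.false hAw (by simp) rfl) rfl

theorem forall_mem {ι : Type*} {A : ι → (ℕ → ℕ) → Prop} (hA : ∀ i, HornDefinable (A i))
    (s : Finset ι) : HornDefinable fun v ↦ ∀ i ∈ s, A i v := by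
  classical
  induction s using Finset.induction with
  | empty => exact HornDefinable.true.congr (by simp)
  | insert i s _ ih => exact ((hA i).and ih).congr (by simp)

theorem exists_eqOn_compl (hA : HornDefinable A) (s : Finset ℕ) :
    HornDefinable fun v ↦ ∃ u, Set.EqOn u v (s : Set ℕ)ᶜ ∧ A u := by
  classical
  induction s using Finset.induction with
  | empty => exact hA.congr (by simp)
  | insert i s _ ih =>
    refine (ih.exists_update i).congr fun v ↦ ⟨?_, ?_⟩
    · rintro ⟨a, u, hu, h⟩
      refine ⟨u, fun j hj ↦ ?_, h⟩
      simp only [Finset.coe_insert, Set.mem_compl_iff, Set.mem_insert_iff, not_or] at hj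
      rw [hu hj.2, update_of_ne hj.1]
    · rintro ⟨u, hu, h⟩
      refine ⟨u i, u, fun j hj ↦ ?_, h⟩
      obtain rfl | hji := eq_or_ne j i
      · simp
      · rw [update_of_ne hji, hu (by simp_all)]

protected theorem eq (i j : ℕ) : HornDefinable fun v ↦ v i = v j := by
  obtain rfl | hij := eq_or_ne i j
  · exact HornDefinable.true.congr (by simp)
  let c : Fin 3 → Clause Bool :=
    ![⟨∅, .stay, false⟩, ⟨{false}, .succ i, true⟩, ⟨{true}, .succ j, false⟩]
  let G : Fin 3 → (ℕ → ℕ) → Prop := ![fun v ↦ v i = 0 ∧ v j = 0, fun _ ↦ True, fun _ ↦ True]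
  have hG : ∀ k, HornDefinable (G k) :=
    Fin.forall_fin_succ.2
      ⟨(HornDefinable.zero i).and (.zero j), Fin.forall_fin_two.2 ⟨.true, .true⟩⟩
  refine (HornDefinable.guardedDerivable (c := c) hG false).congr fun v ↦ ⟨fun h ↦ ?_, fun h ↦ ?_⟩
  · suffices ∀ q v, GuardedDerivable c G q v → v i = v j + q.toNat from this false v h
    intro q v h
    induction h with
    | mk k hG _ hact ih =>
      fin_cases k
      · obtain rfl := hact
        exact hG.1.trans hG.2.symm
      · obtain rfl := hact
        simpa [c, update_of_ne hij.symm] using ih false rfl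
      · obtain rfl := hact
        simpa [c, update_of_ne hij] using ih true rfl
  · suffices ∀ m (v : ℕ → ℕ), v i = m → v j = m → GuardedDerivable c G false v from
      this _ v rfl h.symm
    intro m
    induction m with
    | zero => exact fun v hi hj ↦ .mk (c := c) 0 ⟨hi, hj⟩ (by simp [c]) rfl
    | succ m ih =>
      intro v hi hj
      have h₀ := ih (update (update v i m) j m) (by simp [update_of_ne hij]) (by simp)
      have h₁ : GuardedDerivable c G true (update v j m) := by
        refine .mk (c := c) 1 trivial (by rintro _ rfl; exact h₀) ?_
        funext x
        simp only [update_apply]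
        grind
      refine .mk (c := c) 2 trivial (by rintro _ rfl; exact h₁) ?_
      funext x
      simp only [update_apply]
      grind

protected theorem succ {i m : ℕ} (h : i ≠ m) : HornDefinable fun v ↦ v m = v i + 1 := by
  refine ((HornDefinable.eq m i).image (.succ m)).congr fun w ↦ ⟨?_, fun hw ↦ ?_⟩
  · rintro ⟨v, hv, rfl⟩
    simp [update_of_ne h, hv]
  · exact ⟨update w m (w i), by simp [update_of_ne h], by simp [Action.App, ← hw]⟩

theorem subst (hA : HornDefinable A) {F : (ℕ → ℕ) → ℕ} {m : ℕ}
    (hF : HornDefinable fun v ↦ v m = F v) (hFm : ∀ v a, F (update v m a) = F v) :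
    HornDefinable fun v ↦ A (update v m (F v)) :=
  ((hF.and hA).exists_update m).congr fun v ↦ by simp [hFm]

theorem subst_extend {ι : Type*} [Finite ι] (hA : HornDefinable A) {F : ι → (ℕ → ℕ) → ℕ}
    {m : ι → ℕ} (hm : Injective m) (hF : ∀ i, HornDefinable fun v ↦ v (m i) = F i v)
    (hFm : ∀ i u v, Set.EqOn u v (Set.range m)ᶜ → F i u = F i v) :
    HornDefinable fun v ↦ A (extend m (fun i ↦ F i v) v) := by
  classical
  cases nonempty_fintype ι
  refine (((forall_mem hF .univ).and hA).exists_eqOn_compl (Finset.univ.image m)).congr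
    fun v ↦ ?_
  simp only [Finset.mem_univ, true_imp_iff, Finset.coe_image, Finset.coe_univ, Set.image_univ]
  have hext : Set.EqOn (extend m (fun i ↦ F i v) v) v (Set.range m)ᶜ := fun j hj ↦
    extend_apply' _ _ _ hj
  refine ⟨?_, fun h ↦ ⟨_, hext, fun i ↦ ?_, h⟩⟩
  · rintro ⟨u, huv, hu, h⟩
    convert h
    funext j
    by_cases hj : j ∈ Set.range m
    · obtain ⟨i, rfl⟩ := hj
      rw [hm.extend_apply, hu, hFm i u v huv]
    · rw [hext hj, huv hj]
  · rw [hm.extend_apply, hFm i _ v hext]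

section NatRec

variable {β : Type*} (t y z : ℕ) (X : (ℕ → ℕ) → β) (b : β → ℕ) (s : β → ℕ → ℕ → ℕ)

/-- A loop computing a primitive recursion with parameters `X` in counter `y`, with loop counter
`t` and auxiliary counter `z`. In state `false`, `y` holds the value at `t`; in state `true`, `z`
holds the value at `t + 1`. -/
def recClause : Fin 4 → Clause Bool :=
  ![⟨∅, .stay, false⟩, ⟨{false}, .forget z, false⟩, ⟨{false}, .forget y, true⟩,
    ⟨{true}, .succ t, false⟩]

/-- The guards of `recClause`: the base case, no condition, one step of the recursion, and the
copying of `z` into `y`. -/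
def recGuard : Fin 4 → (ℕ → ℕ) → Prop :=
  ![fun v ↦ v t = 0 ∧ v y = b (X v), fun _ ↦ True, fun v ↦ v z = s (X v) (v t) (v y),
    fun v ↦ v y = v z]

/-- The value of the primitive recursion at `m`, with parameters read off from `v`. -/
def recValue (m : ℕ) (v : ℕ → ℕ) : ℕ := Nat.rec (b (X v)) (s (X v)) m

variable {t y z X b s} (hty : t ≠ y) (htz : t ≠ z) (hyz : y ≠ z)
  (hXt : ∀ v a, X (update v t a) = X v) (hXy : ∀ v a, X (update v y a) = X v)
  (hXz : ∀ v a, X (update v z a) = X v)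
include hty htz hyz hXt hXy hXz

theorem recValue_of_guardedDerivable {q : Bool} {v : ℕ → ℕ}
    (h : GuardedDerivable (recClause t y z) (recGuard t y z X b s) q v) :
    bif q then v z = recValue X b s (v t + 1) v else v y = recValue X b s (v t) v := by
  induction h with
  | @mk i v w hG _ hact ih =>
    fin_cases i
    · obtain rfl := hact
      obtain ⟨ht, hy⟩ := hG
      simpa [recClause, recValue, ht] using hy
    · obtain ⟨a, rfl⟩ := hact
      simpa [recClause, recValue, update_of_ne, *] using ih false rfl
    · obtain ⟨a, rfl⟩ := hact
      have ih : v y = recValue X b s (v t) v := ih false rfl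
      have hG : v z = s (X v) (v t) (v y) := hG
      simpa [recClause, recValue, update_of_ne, hty, hyz.symm, hXy, ih] using hG
    · obtain rfl := hact
      have ih : v z = recValue X b s (v t + 1) v := ih true rfl
      have hG : v y = v z := hG
      simpa [recClause, recValue, update_of_ne, hty.symm, hXt, hG] using ih

theorem guardedDerivable_of_recValue (m : ℕ) : ∀ v : ℕ → ℕ, v t = m → v y = recValue X b s m v →
    GuardedDerivable (recClause t y z) (recGuard t y z X b s) false v := by
  induction m with
  | zero => exact fun v ht hy ↦ .mk (c := recClause t y z) 0 ⟨ht, hy⟩ (by simp [recClause]) rfl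
  | succ m ih =>
    intro v ht hy
    have h₀ := ih (update (update (update v t m) y (recValue X b s m v)) z (v y))
      (by simp [*]) (by simp [recValue, *])
    have h₁ : GuardedDerivable (recClause t y z) (recGuard t y z X b s) true
        (update (update v t m) z (v y)) := by
      refine .mk (c := recClause t y z) 2 ?_ (by rintro _ rfl; exact h₀)
        ⟨v y, funext fun x ↦ ?_⟩
      · simp [recGuard, *, recValue]
      · simp only [update_apply]
        grind
    have h₂ : GuardedDerivable (recClause t y z) (recGuard t y z X b s) false
        (update v z (v y)) := by
      refine .mk (c := recClause t y z) 3 ?_ (by rintro _ rfl; exact h₁) (funext fun x ↦ ?_)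
      · simp [recGuard, *, hty.symm]
      · simp only [update_apply]
        grind
    exact .mk (c := recClause t y z) 1 trivial (by rintro _ rfl; exact h₂) ⟨v z, by simp⟩

theorem natRec (hb : HornDefinable fun v ↦ v y = b (X v))
    (hs : HornDefinable fun v ↦ v z = s (X v) (v t) (v y)) :
    HornDefinable fun v ↦ v y = recValue X b s (v t) v := by
  have hG : ∀ i, HornDefinable (recGuard t y z X b s i) :=
    Fin.forall_fin_succ.2 ⟨(HornDefinable.zero t).and hb, Fin.forall_fin_succ.2
      ⟨.true, Fin.forall_fin_two.2 ⟨hs, .eq y z⟩⟩⟩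
  exact (HornDefinable.guardedDerivable (c := recClause t y z) hG false).congr fun v ↦
    ⟨recValue_of_guardedDerivable hty htz hyz hXt hXy hXz,
      guardedDerivable_of_recValue hty htz hyz hXt hXy hXz _ v rfl⟩

end NatRec

end HornDefinable

/-- The graph of `f` is Horn definable, for all choices of argument and value counters. -/
def HornComputable {n : ℕ} (f : List.Vector ℕ n → ℕ) : Prop :=
  ∀ (inp : Fin n → ℕ) (out : ℕ),
    HornDefinable fun v ↦ v out = f (List.Vector.ofFn fun i ↦ v (inp i))

theorem exists_fresh {n : ℕ} (inp : Fin n → ℕ) (out : ℕ) : ∃ M, out < M ∧ ∀ i, inp i < M := by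
  obtain ⟨K, hK⟩ := (Set.finite_range inp).bddAbove
  exact ⟨max out K + 1, by omega, fun i ↦ by have := hK ⟨i, rfl⟩; omega⟩

namespace HornComputable

theorem succ : HornComputable fun v : List.Vector ℕ 1 ↦ v.head.succ := by
  intro inp out
  obtain ⟨M, hM, hinp⟩ := exists_fresh inp out
  refine ((HornDefinable.eq out M).subst (.succ (hinp 0).ne) fun v a ↦ ?_).congr fun v ↦ ?_
  · rw [Function.update_of_ne (hinp 0).ne]
  · rw [Function.update_of_ne hM.ne, Function.update_self]
    rfl

theorem comp {m n : ℕ} {f : List.Vector ℕ n → ℕ} {g : Fin n → List.Vector ℕ m → ℕ}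
    (hf : HornComputable f) (hg : ∀ i, HornComputable (g i)) :
    HornComputable fun a ↦ f (List.Vector.ofFn fun i ↦ g i a) := by
  intro inp out
  obtain ⟨M, hM, hinp⟩ := exists_fresh inp out
  have hinj : Injective fun i : Fin n ↦ M + i := fun i j h ↦ by simpa [Fin.ext_iff] using h
  have hfresh : ∀ j < M, j ∉ Set.range fun i : Fin n ↦ M + i := by
    rintro _ hj ⟨i, rfl⟩
    exact absurd hj (by simp)
  refine ((hf (fun i ↦ M + i) out).subst_extend hinj (fun i ↦ hg i inp (M + i))
    fun i u v huv ↦ ?_).congr fun v ↦ ?_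
  · simp only [huv (hfresh _ (hinp _))]
  · simp only [extend_apply' _ _ _ (hfresh out hM), hinj.extend_apply]

theorem prec {n : ℕ} {f : List.Vector ℕ n → ℕ} {g : List.Vector ℕ (n + 2) → ℕ}
    (hf : HornComputable f) (hg : HornComputable g) :
    HornComputable fun v : List.Vector ℕ (n + 1) ↦
      v.head.rec (f v.tail) fun y IH ↦ g (y ::ᵥ IH ::ᵥ v.tail) := by
  intro inp out
  obtain ⟨M, hM, hinp⟩ := exists_fresh inp out
  let X (v : ℕ → ℕ) : List.Vector ℕ n := List.Vector.ofFn fun i ↦ v (inp i.succ)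
  let F := HornDefinable.recValue X f fun a k r ↦ g (k ::ᵥ r ::ᵥ a)
  have hX : ∀ j, M ≤ j → ∀ v a, X (update v j a) = X v := fun j hj v a ↦ by
    simp only [X, update_of_ne ((hinp _).trans_le hj).ne]
  have hF : ∀ j, M ≤ j → ∀ m v a, F m (update v j a) = F m v := fun j hj m v a ↦ by
    simp only [F, HornDefinable.recValue, hX j hj]
  have hrec : HornDefinable fun v ↦ v (M + 1) = F (v M) v :=
    .natRec (z := M + 2) (by omega) (by omega) (by omega) (hX M le_rfl) (hX _ (by omega))
      (hX _ (by omega)) (hf (fun i ↦ inp i.succ) (M + 1))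
      (hg (Fin.cons M (Fin.cons (M + 1) fun i ↦ inp i.succ)) (M + 2))
  have hinput : HornDefinable fun v ↦ v (M + 1) = F (v (inp 0)) v :=
    (hrec.subst (.eq M (inp 0)) fun v a ↦ update_of_ne (hinp 0).ne _ _).congr fun v ↦ by
      rw [update_of_ne (by omega), update_self, hF M le_rfl]
  refine ((HornDefinable.eq out (M + 1)).subst hinput fun v a ↦ ?_).congr fun v ↦ ?_
  · rw [hF _ (by omega), update_of_ne (by have := hinp 0; omega)]
  · rw [update_of_ne (by omega), update_self]
    simp only [F, HornDefinable.recValue, X, List.Vector.ofFn, List.Vector.head_cons,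
      List.Vector.tail_cons]

end HornComputable

theorem hornComputable_of_primrec' {n : ℕ} {f : List.Vector ℕ n → ℕ} (hf : Nat.Primrec' f) :
    HornComputable f := by
  induction hf with
  | zero => exact fun _ out ↦ .zero out
  | succ => exact .succ
  | get i => exact fun inp out ↦ by simpa using HornDefinable.eq out (inp i)
  | comp _ _ _ ihf ihg => exact ihf.comp ihg
  | prec _ _ ihf ihg => exact ihf.prec ihg

theorem dom_eval_iff_exists_evaln (c : Nat.Partrec.Code) (x : ℕ) :
    (c.eval x).Dom ↔ ∃ s, (Nat.Partrec.Code.evaln s c x).isSome := by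
  simp only [Part.dom_iff_mem, Nat.Partrec.Code.evaln_complete, Option.isSome_iff_exists]
  exact exists_comm

/-- The function of `(c, s)` vanishing iff the program with code `c` halts on input `0` within
`s` steps. -/
def stillRunning (a : List.Vector ℕ 2) : ℕ :=
  if (Nat.Partrec.Code.evaln a.tail.head (Denumerable.ofNat Nat.Partrec.Code a.head) 0).isSome
  then 0 else 1

theorem primrec_stillRunning : Primrec stillRunning :=
  have hevaln : Primrec fun a : List.Vector ℕ 2 ↦ Nat.Partrec.Code.evaln a.tail.head
      (Denumerable.ofNat Nat.Partrec.Code a.head) 0 :=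
    Nat.Partrec.Code.primrec_evaln.comp (((Primrec.vector_head.comp Primrec.vector_tail).pair
      ((Primrec.ofNat _).comp Primrec.vector_head)).pair (Primrec.const 0))
  Primrec.ite (Primrec.eq.comp (Primrec.option_isSome.comp hevaln) (Primrec.const true))
    (Primrec.const 0) (Primrec.const 1)

theorem exists_horn_system_halting :
    ∃ (Q : Type) (_ : Finite Q) (C : Set (Clause Q)) (k : ℕ) (P : Q),
      (∀ c ∈ C, c.act.BoundedBy (k + 1)) ∧ ∀ c : Nat.Partrec.Code,
        (c.eval 0).Dom ↔ ∃ v : ℕ → ℕ, v 0 = Encodable.encode c ∧ Derivable C P v := by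
  obtain ⟨Q, finQ, C, k, P, hk, hP⟩ := (hornComputable_of_primrec'
    (Nat.Primrec'.of_prim primrec_stillRunning) (fun i ↦ i) 2).and (HornDefinable.zero 2)
  refine ⟨Q, finQ, C, k, P, fun c hc ↦ (hk c hc).mono k.le_succ, fun c ↦ ?_⟩
  simp only [hP, dom_eval_iff_exists_evaln]
  constructor
  · rintro ⟨s, hs⟩
    exact ⟨![Encodable.encode c, s, 0] ∘ Fin.ofNat 3, rfl,
      by simp [stillRunning, List.Vector.ofFn, Fin.ofNat, hs]⟩
  · rintro ⟨v, hv, hrun, hzero⟩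
    refine ⟨v 1, by_contra fun hn ↦ ?_⟩
    simp [stillRunning, List.Vector.ofFn, hv, hn, hzero] at hrun

end Horn

section Digits

/-- The ring `ℤ/p²` of two-digit `p`-adic integers reduces to the field of first digits. -/
def firstDigit (p : ℕ) : ZMod (p ^ 2) →+* ZMod p :=
  ZMod.castHom (dvd_pow_self p two_ne_zero) (ZMod p)

/-- What a cell knows about an integer `N = p ^ v * n` with `p ∤ n`: the residues modulo `p²` of `N`
itself and of its unit part `n`, but not the level `v`. -/
@[ext]
structure Digits (p : ℕ) where
  residue : ZMod (p ^ 2)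
  unit : ZMod (p ^ 2)

/-- The constraints on the digits of a single nonzero integer. -/
structure Digits.Valid {p : ℕ} (a : Digits p) : Prop where
  unit_ne_zero : firstDigit p a.unit ≠ 0
  unit_eq_residue : firstDigit p a.residue ≠ 0 → a.unit = a.residue

variable {p : ℕ}

/-- The possible relations modulo `p²` between the unit parts `x` and `y` of two nonzero integers
and the unit part `z` of their nonzero sum, according to the levels of the three integers. -/
def UnitSum (x y z : ZMod (p ^ 2)) : Prop :=
  z = x ∨ z = x + p * y ∨ z = y ∨ z = y + p * x ∨ z = x + y ∨ p * z = x + y ∨ x + y = 0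

/-- A certificate that summands with unit parts `x` and `y` have the same level; `z` is the unit
part of the sum. -/
def SameLevel (x y z : ZMod (p ^ 2)) : Prop := z = x + y

/-- A certificate that, of two summands with unit parts `x` and `y`, the second has the level of the
first plus one; `z` is the unit part of the sum. -/
def NextLevel (x y z : ZMod (p ^ 2)) : Prop :=
  z = x + p * y ∧ firstDigit p x + firstDigit p y ≠ 0 ∧ firstDigit p x - firstDigit p y ≠ 0

/-- The local constraint between the digits `a`, `c` of two integers and the digits `b` of their
sum. -/
structure DigitSum (a c b : Digits p) : Prop where
  left_valid : a.Valid
  right_valid : c.Valid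
  sum_valid : b.Valid
  residue_add : a.residue + c.residue = b.residue
  unitSum : UnitSum a.unit c.unit b.unit

theorem UnitSum.symm {x y z : ZMod (p ^ 2)} (h : UnitSum x y z) : UnitSum y x z := by
  unfold UnitSum at *
  rw [add_comm y x]
  tauto

theorem firstDigit_natCast_mul (x : ZMod (p ^ 2)) : firstDigit p ((p : ZMod (p ^ 2)) * x) = 0 := by
  rw [map_mul, map_natCast, ZMod.natCast_self, zero_mul]

variable [Fact p.Prime]

theorem firstDigit_eq_zero_iff {x : ZMod (p ^ 2)} :
    firstDigit p x = 0 ↔ ∃ y : ZMod (p ^ 2), x = (p : ZMod (p ^ 2)) * y := by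
  refine ⟨fun h ↦ ?_, fun ⟨y, hy⟩ ↦ hy ▸ firstDigit_natCast_mul y⟩
  obtain ⟨n, rfl⟩ := ZMod.natCast_zmod_surjective x
  rw [map_natCast, ZMod.natCast_eq_zero_iff] at h
  obtain ⟨m, rfl⟩ := h
  exact ⟨m, Nat.cast_mul p m⟩

theorem natCast_mul_eq_zero_iff {x : ZMod (p ^ 2)} :
    (p : ZMod (p ^ 2)) * x = 0 ↔ firstDigit p x = 0 := by
  obtain ⟨n, rfl⟩ := ZMod.natCast_zmod_surjective x
  rw [map_natCast, ZMod.natCast_eq_zero_iff, ← Nat.cast_mul, ZMod.natCast_eq_zero_iff, pow_two]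
  exact Nat.mul_dvd_mul_iff_left (NeZero.pos p)

theorem natCast_mul_eq_natCast_mul_iff {x y : ZMod (p ^ 2)} :
    (p : ZMod (p ^ 2)) * x = (p : ZMod (p ^ 2)) * y ↔ firstDigit p x = firstDigit p y := by
  rw [← sub_eq_zero, ← mul_sub, natCast_mul_eq_zero_iff, map_sub, sub_eq_zero]

theorem exists_mul_intCast_eq {x : ZMod (p ^ 2)} (hx : firstDigit p x ≠ 0) (y : ZMod (p ^ 2)) :
    ∃ i : ℤ, x * (i : ZMod (p ^ 2)) = y := by
  have hunit : IsUnit x := by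
    obtain ⟨n, rfl⟩ := ZMod.natCast_zmod_surjective x
    rw [map_natCast, Ne, ZMod.natCast_eq_zero_iff] at hx
    rw [ZMod.isUnit_iff_coprime]
    exact ((((Fact.out : p.Prime).coprime_iff_not_dvd).2 hx).symm).pow_right 2
  obtain ⟨i, hi⟩ := ZMod.intCast_surjective ((↑hunit.unit⁻¹ : ZMod (p ^ 2)) * y)
  exact ⟨i, by rw [hi, ← mul_assoc, hunit.mul_val_inv, one_mul]⟩

variable {x y z t : ZMod (p ^ 2)}

theorem UnitSum.firstDigit_sum (h : UnitSum x y z) (hxy : x + y = (p : ZMod (p ^ 2)) * t)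
    (ht : firstDigit p t ≠ 0) (hz : firstDigit p z ≠ 0) :
    firstDigit p z = firstDigit p x ∨ firstDigit p z = -firstDigit p x ∨
      firstDigit p z = firstDigit p t := by
  have hy : firstDigit p y = -firstDigit p x :=
    (neg_eq_of_add_eq_zero_right (by rw [← map_add, hxy, firstDigit_natCast_mul])).symm
  rcases h with h | h | h | h | h | h | h
  · exact .inl (by rw [h])
  · exact .inl (by rw [h, map_add, firstDigit_natCast_mul, add_zero])
  · exact .inr (.inl (by rw [h, hy]))
  · exact .inr (.inl (by rw [h, map_add, firstDigit_natCast_mul, add_zero, hy]))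
  · exact absurd (by rw [h, hxy, firstDigit_natCast_mul]) hz
  · exact .inr (.inr (natCast_mul_eq_natCast_mul_iff.1 (h.trans hxy)))
  · exact absurd (natCast_mul_eq_zero_iff.1 (hxy ▸ h)) ht

theorem UnitSum.firstDigit_summand (h : UnitSum x y z) (hyz : z = y + (p : ZMod (p ^ 2)) * t)
    (ht : firstDigit p t ≠ 0) (hx : firstDigit p x ≠ 0) :
    firstDigit p x = firstDigit p y ∨ firstDigit p x = -firstDigit p y ∨
      firstDigit p x = firstDigit p t := by
  have hz : firstDigit p z = firstDigit p y := by
    rw [hyz, map_add, firstDigit_natCast_mul, add_zero]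
  rcases h with h | h | h | h | h | h | h
  · exact .inl (by rw [← hz, h])
  · exact .inl (by rw [← hz, h, map_add, firstDigit_natCast_mul, add_zero])
  · exact absurd (natCast_mul_eq_zero_iff.1 (by simpa [h] using hyz.symm)) ht
  · exact .inr (.inr (natCast_mul_eq_natCast_mul_iff.1 (add_left_cancel (h.symm.trans hyz))))
  · exact absurd (by rw [add_right_cancel (h.symm.trans (hyz.trans (add_comm _ _))),
      firstDigit_natCast_mul]) hx
  · exact .inr (.inl (eq_neg_of_add_eq_zero_left (by rw [← map_add, ← h, firstDigit_natCast_mul])))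
  · exact .inr (.inl (eq_neg_of_add_eq_zero_left (by rw [← map_add, h, map_zero])))

theorem UnitSum.eq_add (h : UnitSum x y z) (hx : firstDigit p x ≠ 0) (hy : firstDigit p y ≠ 0)
    (hz : firstDigit p z ≠ 0) (hxyz : firstDigit p z = firstDigit p x + firstDigit p y) :
    z = x + y := by
  rcases h with h | h | h | h | h | h | h
  · exact absurd (by simpa [h] using hxyz) hy
  · exact absurd (by simpa [h] using hxyz) hy
  · exact absurd (by simpa [h] using hxyz) hx
  · exact absurd (by simpa [h] using hxyz) hx
  · exact h
  · exact absurd (by rw [hxyz, ← map_add, ← h, firstDigit_natCast_mul]) hz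
  · exact absurd (by rw [hxyz, ← map_add, h, map_zero]) hz

end Digits

section Affine

variable {p : ℕ} [Fact p.Prime]

theorem exists_ge_intCast_eq (z : ZMod p) (N : ℤ) : ∃ i : ℤ, N ≤ i ∧ (i : ZMod p) = z := by
  obtain ⟨i, rfl⟩ := ZMod.intCast_surjective z
  refine ⟨i + p * (|N| + |i|), ?_, by simp⟩
  have : |N| + |i| ≤ p * (|N| + |i|) :=
    le_mul_of_one_le_left (by positivity) (mod_cast NeZero.one_le)
  linarith [neg_abs_le i, le_abs_self N]

theorem exists_le_intCast_eq (z : ZMod p) (N : ℤ) : ∃ i : ℤ, i ≤ N ∧ (i : ZMod p) = z := by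
  obtain ⟨i, hN, hi⟩ := exists_ge_intCast_eq (-z) (-N)
  exact ⟨-i, by linarith, by rw [Int.cast_neg, hi, neg_neg]⟩

theorem exists_notMem_of_card_lt {s : Finset (ZMod p)} (hs : s.card < p) : ∃ z, z ∉ s := by
  by_contra! h
  rw [Finset.eq_univ_iff_forall.2 h, Finset.card_univ, ZMod.card] at hs
  exact hs.false

theorem ofNat_ne_zero_of_lt {n : ℕ} [n.AtLeastTwo] (hn : ofNat(n) < p) :
    (ofNat(n) : ZMod p) ≠ 0 := by
  rw [← Nat.cast_ofNat, Ne, ZMod.natCast_eq_zero_iff]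
  exact Nat.not_dvd_of_pos_of_lt (NeZero.pos n) hn

/-- The relation `f i + g j = h (i + j)`, as far as it can be read off when the multiples of `p` are
left out and `i` has to be sufficiently to the right of `j`. -/
def AdditiveOffMultiples {R : Type*} [Add R] (p : ℕ) (L : ℤ) (f g h : ℤ → R) : Prop :=
  ∀ i j : ℤ, (i : ZMod p) ≠ 0 → (j : ZMod p) ≠ 0 → ((i + j : ℤ) : ZMod p) ≠ 0 → L ≤ i - j →
    f i + g j = h (i + j)

namespace AdditiveOffMultiples

variable {R : Type*} [CommRing R] {L : ℤ} {f g h : ℤ → R}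

theorem sub_eq_sub (H : AdditiveOffMultiples p L f g h) {i j d : ℤ} (hi : (i : ZMod p) ≠ 0)
    (hid : ((i + d : ℤ) : ZMod p) ≠ 0) (hj : (j : ZMod p) ≠ 0) (hjd : ((j - d : ℤ) : ZMod p) ≠ 0)
    (hij : ((i + j : ℤ) : ZMod p) ≠ 0) (hL : L + 2 * |d| ≤ i - j) :
    f (i + d) - f i = g j - g (j - d) := by
  have hshift : i + d + (j - d) = i + j := by ring
  have h₁ := H i j hi hj hij (by linarith [abs_nonneg d])
  have h₂ := H (i + d) (j - d) hid hjd (by rwa [hshift]) (by linarith [neg_abs_le d])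
  rw [hshift, ← h₁] at h₂
  linear_combination h₂

theorem exists_sub_eq (H : AdditiveOffMultiples p L f g h) (hp : 5 ≤ p) (d : ℤ) :
    ∃ c, ∀ i : ℤ, (i : ZMod p) ≠ 0 → ((i + d : ℤ) : ZMod p) ≠ 0 → f (i + d) - f i = c := by
  obtain ⟨z, hz⟩ := exists_notMem_of_card_lt (s := {0, -(d : ZMod p)})
    (Finset.card_le_two.trans_lt (by omega))
  obtain ⟨i₀, rfl⟩ := ZMod.intCast_surjective z
  simp only [Finset.mem_insert, Finset.mem_singleton, not_or, ← add_eq_zero_iff_eq_neg] at hz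
  refine ⟨f (i₀ + d) - f i₀, fun i hi hid ↦ ?_⟩
  obtain ⟨w, hw⟩ := exists_notMem_of_card_lt (s := {0, (d : ZMod p), -(i : ZMod p), -(i₀ : ZMod p)})
    (Finset.card_le_four.trans_lt (by omega))
  obtain ⟨j, hj, rfl⟩ := exists_le_intCast_eq w (-(|L| + |i| + |i₀| + 2 * |d|))
  simp only [Finset.mem_insert, Finset.mem_singleton, not_or, ← sub_eq_zero (b := (d : ZMod p)),
    ← add_eq_zero_iff_eq_neg] at hw
  have hbounds := And.intro (le_abs_self L) (And.intro (neg_abs_le i) (neg_abs_le i₀))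
  rw [H.sub_eq_sub hi hid hw.1 (mod_cast hw.2.1) (by rw [add_comm]; exact mod_cast hw.2.2.1)
      (by linarith [abs_nonneg i₀]),
    H.sub_eq_sub hz.1 (mod_cast hz.2) hw.1 (mod_cast hw.2.1)
      (by rw [add_comm]; exact mod_cast hw.2.2.2) (by linarith [abs_nonneg i])]

theorem exists_slope (H : AdditiveOffMultiples p L f g h) (hp : 5 ≤ p) :
    ∃ κ, ∀ i d : ℤ, (i : ZMod p) ≠ 0 → ((i + d : ℤ) : ZMod p) ≠ 0 → f (i + d) - f i = κ * d := by
  choose G hG using H.exists_sub_eq hp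
  have hadd (d e : ℤ) : G (d + e) = G d + G e := by
    obtain ⟨z, hz⟩ := exists_notMem_of_card_lt
      (s := {0, -(d : ZMod p), -((d : ZMod p) + e)}) (Finset.card_le_three.trans_lt (by omega))
    obtain ⟨i, rfl⟩ := ZMod.intCast_surjective z
    simp only [Finset.mem_insert, Finset.mem_singleton, not_or, ← add_eq_zero_iff_eq_neg] at hz
    rw [← hG (d + e) i hz.1 (mod_cast hz.2.2), ← hG d i hz.1 (mod_cast hz.2.1),
      ← hG e (i + d) (mod_cast hz.2.1) (by push_cast; rw [add_assoc]; exact hz.2.2), add_assoc]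
    ring
  refine ⟨G 1, fun i d hi hid ↦ ?_⟩
  rw [hG d i hi hid, mul_comm, ← zsmul_eq_mul, ← AddMonoidHom.mk'_apply G hadd, ← map_zsmul,
    smul_eq_mul, mul_one]

theorem exists_affine (H : AdditiveOffMultiples p L f g h) (hp : 5 ≤ p) :
    ∃ κ a c : R, (∀ i : ℤ, (i : ZMod p) ≠ 0 → f i = κ * i + a) ∧
      (∀ i : ℤ, (i : ZMod p) ≠ 0 → g i = κ * i + c) ∧
      (∀ i : ℤ, (i : ZMod p) ≠ 0 → h i = κ * i + (a + c)) := by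
  obtain ⟨κ, hκ⟩ := H.exists_slope hp
  have hf (i : ℤ) (hi : (i : ZMod p) ≠ 0) : f i = κ * i + (f 1 - κ) := by
    have := hκ 1 (i - 1) (by simp) (by simpa using hi)
    rw [add_sub_cancel] at this
    push_cast at this
    linear_combination this
  have hg (j : ℤ) (hj : (j : ZMod p) ≠ 0) : g j = κ * j + (g 1 - κ) := by
    obtain ⟨z, hz⟩ := exists_notMem_of_card_lt (s := {0, -((j : ZMod p) - 1), -(j : ZMod p)})
      (Finset.card_le_three.trans_lt (by omega))
    obtain ⟨i, hi, rfl⟩ := exists_ge_intCast_eq z (L + 2 * |j - 1| + j)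
    simp only [Finset.mem_insert, Finset.mem_singleton, not_or, ← add_eq_zero_iff_eq_neg] at hz
    have hid : ((i + (j - 1) : ℤ) : ZMod p) ≠ 0 := mod_cast hz.2.1
    have := H.sub_eq_sub (d := j - 1) hz.1 hid hj (by simp) (mod_cast hz.2.2) (by linarith)
    rw [hκ i (j - 1) hz.1 hid, sub_sub_cancel] at this
    push_cast at this
    linear_combination -this
  refine ⟨κ, f 1 - κ, g 1 - κ, hf, hg, fun l hl ↦ ?_⟩
  obtain ⟨z, hz⟩ := exists_notMem_of_card_lt (s := {0, (l : ZMod p)})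
    (Finset.card_le_two.trans_lt (by omega))
  obtain ⟨i, hi, rfl⟩ := exists_ge_intCast_eq z (|L| + |l|)
  simp only [Finset.mem_insert, Finset.mem_singleton, not_or] at hz
  have hli : ((l - i : ℤ) : ZMod p) ≠ 0 := by
    push_cast
    exact sub_ne_zero.2 (Ne.symm hz.2)
  have := H i (l - i) hz.1 hli (by simpa using hl)
    (by linarith [le_abs_self L, le_abs_self l, abs_nonneg L, abs_nonneg l])
  rw [add_sub_cancel, hf i hz.1, hg _ hli] at this
  rw [← this]
  push_cast
  ring

end AdditiveOffMultiples

end Affine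

section Progressions

/-- The set contains a full residue class modulo a power of `p`. -/
def ContainsProgression (p : ℕ) (S : Set ℤ) : Prop :=
  ∃ (m : ℕ) (r : ℤ), ∀ t : ℤ, r + p ^ m * t ∈ S

variable {p : ℕ} {S : Set ℤ}

theorem ContainsProgression.exists_ge (h : ContainsProgression p S) (hp : 0 < p) (N : ℤ) :
    ∃ u ∈ S, N ≤ u := by
  obtain ⟨m, r, hr⟩ := h
  have hpm : (1 : ℤ) ≤ p ^ m := one_le_pow₀ (mod_cast hp)
  refine ⟨_, hr (|N| + |r|), ?_⟩
  have := le_mul_of_one_le_left (add_nonneg (abs_nonneg N) (abs_nonneg r)) hpm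
  linarith [le_abs_self N, neg_abs_le r]

theorem ContainsProgression.exists_le (h : ContainsProgression p S) (hp : 0 < p) (N : ℤ) :
    ∃ u ∈ S, u ≤ N := by
  obtain ⟨m, r, hr⟩ := h
  have hpm : (1 : ℤ) ≤ p ^ m := one_le_pow₀ (mod_cast hp)
  refine ⟨_, hr (-(|N| + |r|)), ?_⟩
  have := le_mul_of_one_le_left (add_nonneg (abs_nonneg N) (abs_nonneg r)) hpm
  linarith [neg_abs_le N, le_abs_self r]

theorem ContainsProgression.iInter {ι : Type*} [Fintype ι] {p : ι → ℕ} {S : ι → Set ℤ}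
    (hp : ∀ i, 0 < p i) (hcop : Pairwise (Function.onFun Nat.Coprime p))
    (h : ∀ i, ContainsProgression (p i) (S i)) :
    ContainsProgression (∏ i, p i) (⋂ i, S i) := by
  choose m r hr using h
  have hpm (i : ι) : ((p i ^ m i : ℕ) : ℤ) ≠ 0 := mod_cast (pow_pos (hp i) _).ne'
  obtain ⟨z, hz⟩ := Nat.chineseRemainderOfFinset (fun i ↦ (r i % ((p i ^ m i : ℕ) : ℤ)).toNat)
    (fun i ↦ p i ^ m i) Finset.univ (fun i _ ↦ mod_cast hpm i)
    fun i _ j _ hij ↦ (hcop hij).pow _ _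
  refine ⟨∑ i, m i, z, fun t ↦ Set.mem_iInter.2 fun i ↦ ?_⟩
  have hzr : (z : ℤ) ≡ r i [ZMOD ((p i ^ m i : ℕ) : ℤ)] := by
    have h := Int.natCast_modEq_iff.2 (hz i (Finset.mem_univ i))
    rw [Int.toNat_of_nonneg (Int.emod_nonneg _ (hpm i))] at h
    exact h.trans (Int.mod_modEq _ _)
  obtain ⟨s, hs⟩ := hzr.symm.dvd
  obtain ⟨q, hq⟩ : p i ^ m i ∣ (∏ i, p i) ^ ∑ i, m i :=
    (pow_dvd_pow_of_dvd (Finset.dvd_prod_of_mem p (Finset.mem_univ i)) _).trans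
      (pow_dvd_pow _ (Finset.single_le_sum (fun _ _ ↦ Nat.zero_le _) (Finset.mem_univ i)))
  rw [← Nat.cast_pow, hq]
  convert hr i (s + q * t) using 1
  push_cast at hs ⊢
  linear_combination hs

end Progressions

section Resolution

variable {p : ℕ} [hp : Fact p.Prime]

/-- Digits along three tracks, the first moving to the left, the second at rest, and the third
moving to the right: the cells `u` and `w` of the moving tracks, once past each other, meet at the
cell `u + w` of the middle track. -/
structure DigitTracks (A B C : ℤ → Digits p) : Prop where
  digitSum : ∀ {u w : ℤ}, w ≤ u → DigitSum (A u) (C w) (B (u + w))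
  left_residue : ∀ u, (A (u + 1)).residue = (A u).residue + 4
  right_residue : ∀ w, (C (w + 1)).residue = (C w).residue + 4

/-- The cells of level `k` are identified: on each track they form a progression of difference
`p ^ k`, without the multiples of `p`, and the unit parts are linear along it. -/
structure IsResolved (A B C : ℤ → Digits p) (k : ℕ) (α γ : ℤ) (κ : ZMod (p ^ 2)) : Prop where
  firstDigit_ne_zero : firstDigit p κ ≠ 0
  left : ∀ i : ℤ, (i : ZMod p) ≠ 0 → (A (α + p ^ k * i)).unit = κ * i
  right : ∀ i : ℤ, (i : ZMod p) ≠ 0 → (C (γ + p ^ k * i)).unit = κ * i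
  sum : ∀ i : ℤ, (i : ZMod p) ≠ 0 → (B (α + γ + p ^ k * i)).unit = κ * i

theorem eq_zero_add_mul_of_step {R : Type*} [Ring R] {g : ℤ → R} {d : R}
    (h : ∀ x, g (x + 1) = g x + d) (x : ℤ) : g x = g 0 + x * d := by
  induction x with
  | zero => simp
  | succ i ih => rw [h, ih]; push_cast; rw [add_mul, one_mul, add_assoc]
  | pred i ih =>
    have := h (-(i : ℤ) - 1)
    rw [sub_add_cancel, ih] at this
    rw [eq_sub_of_add_eq this.symm]
    push_cast
    rw [sub_mul, one_mul, add_sub_assoc]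

theorem eq_of_two_classes (h5 : 5 ≤ p) {κ ξ τ : ZMod p} (hκ : κ ≠ 0)
    (h : ∀ e : ℤ, (e : ZMod p) ≠ 0 → ξ = κ * e ∨ ξ = -(κ * e) ∨ ξ = τ) : ξ = τ := by
  have h₃ : κ * 3 ≠ 0 :=
    mul_ne_zero hκ (ofNat_ne_zero_of_lt (by omega))
  have h₁ := h 1 (by simp)
  have two_ne : (2 : ZMod p) ≠ 0 := ofNat_ne_zero_of_lt (by omega)
  have h₂ := h 2 (mod_cast two_ne)
  push_cast at h₁ h₂
  rcases h₁ with h₁ | h₁ | h₁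
  · rcases h₂ with h₂ | h₂ | h₂
    · exact absurd (by linear_combination h₁ - h₂) hκ
    · exact absurd (by linear_combination h₂ - h₁) h₃
    · exact h₂
  · rcases h₂ with h₂ | h₂ | h₂
    · exact absurd (by linear_combination h₁ - h₂) h₃
    · exact absurd (by linear_combination h₂ - h₁) hκ
    · exact h₂
  · exact h₁

theorem abs_le_pow_mul {a b : ℤ} (h : |a| ≤ b) (k : ℕ) : |a| ≤ p ^ k * b :=
  h.trans (le_mul_of_one_le_left ((abs_nonneg a).trans h)
    (one_le_pow₀ (mod_cast hp.1.one_le)))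

variable {A B C : ℤ → Digits p}

theorem DigitTracks.exists_isResolved_zero (T : DigitTracks A B C) (h5 : 5 ≤ p) :
    ∃ α γ κ, IsResolved A B C 0 α γ κ ∧ (A α).residue = 0 ∧ (C γ).residue = 0 := by
  have h4 : firstDigit p 4 ≠ 0 := by
    rw [map_ofNat]
    exact ofNat_ne_zero_of_lt (by omega)
  have hA := eq_zero_add_mul_of_step (g := fun u ↦ (A u).residue) T.left_residue
  have hC := eq_zero_add_mul_of_step (g := fun w ↦ (C w).residue) T.right_residue
  obtain ⟨α, hα⟩ := exists_mul_intCast_eq h4 (-(A 0).residue)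
  obtain ⟨γ, hγ⟩ := exists_mul_intCast_eq h4 (-(C 0).residue)
  have hAi (i : ℤ) : (A (α + i)).residue = 4 * i := by
    rw [hA]; push_cast; linear_combination hα
  have hCi (i : ℤ) : (C (γ + i)).residue = 4 * i := by
    rw [hC]; push_cast; linear_combination hγ
  have hBi (i : ℤ) : (B (α + γ + i)).residue = 4 * i ∧ (B (α + γ + i)).Valid := by
    have hle : γ + (i - (|γ - α| + |i|)) ≤ α + (|γ - α| + |i|) := by
      linarith [le_abs_self (γ - α), le_abs_self i, abs_nonneg (γ - α), abs_nonneg i]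
    have h := T.digitSum hle
    rw [show α + (|γ - α| + |i|) + (γ + (i - (|γ - α| + |i|))) = α + γ + i by ring] at h
    refine ⟨?_, h.sum_valid⟩
    rw [← h.residue_add, hAi, hCi]
    push_cast
    ring
  have hunit {a : Digits p} (ha : a.Valid) {i : ℤ} (hi : (i : ZMod p) ≠ 0)
      (hai : a.residue = 4 * i) : a.unit = 4 * i := by
    rw [← hai]
    apply ha.unit_eq_residue
    rw [hai, map_mul, map_intCast]
    exact mul_ne_zero h4 hi
  refine ⟨α, γ, 4, ⟨h4, fun i hi ↦ ?_, fun i hi ↦ ?_, fun i hi ↦ ?_⟩,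
    by simpa using hAi 0, by simpa using hCi 0⟩ <;> rw [pow_zero, one_mul]
  · exact hunit (T.digitSum le_rfl).left_valid hi (hAi i)
  · exact hunit (T.digitSum le_rfl).right_valid hi (hCi i)
  · exact hunit (hBi i).2 hi (hBi i).1

namespace IsResolved

variable {k : ℕ} {α γ : ℤ} {κ : ZMod (p ^ 2)}

theorem firstDigit_mul_ne_zero (R : IsResolved A B C k α γ κ) {s : ℤ} (hs : (s : ZMod p) ≠ 0) :
    firstDigit p (κ * s) ≠ 0 := by
  rw [map_mul, map_intCast]
  exact mul_ne_zero R.firstDigit_ne_zero hs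

theorem firstDigit_sum (R : IsResolved A B C k α γ κ) (T : DigitTracks A B C) (h5 : 5 ≤ p) {s : ℤ}
    (hs : (s : ZMod p) ≠ 0) :
    firstDigit p (B (α + γ + p ^ (k + 1) * s)).unit = firstDigit p κ * s := by
  refine eq_of_two_classes h5 R.firstDigit_ne_zero fun e he ↦ ?_
  obtain ⟨i, hi, hie⟩ := exists_ge_intCast_eq (e : ZMod p) (|γ - α| + |p * s|)
  have hle : γ + p ^ k * (p * s - i) ≤ α + p ^ k * i := by
    have : |γ - α| ≤ p ^ k * (2 * i - p * s) := abs_le_pow_mul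
      (by linarith [le_abs_self (p * s), abs_nonneg (p * s), abs_nonneg (γ - α)]) k
    linarith [le_abs_self (γ - α)]
  have h := T.digitSum hle
  rw [show α + (p : ℤ) ^ k * i + (γ + p ^ k * (p * s - i)) = α + γ + p ^ (k + 1) * s by ring] at h
  have hu := h.unitSum
  rw [R.left i (hie ▸ he), R.right _ (by simpa [hie] using he)] at hu
  simpa only [map_mul, map_intCast, hie] using hu.firstDigit_sum (t := κ * (s : ZMod (p ^ 2)))
    (by push_cast; ring) (R.firstDigit_mul_ne_zero hs) h.sum_valid.unit_ne_zero

theorem firstDigit_left (R : IsResolved A B C k α γ κ) (T : DigitTracks A B C) (h5 : 5 ≤ p) {s : ℤ}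
    (hs : (s : ZMod p) ≠ 0) :
    firstDigit p (A (α + p ^ (k + 1) * s)).unit = firstDigit p κ * s := by
  refine eq_of_two_classes h5 R.firstDigit_ne_zero fun e he ↦ ?_
  obtain ⟨i, hi, hie⟩ := exists_le_intCast_eq (e : ZMod p) (-(|γ - α - p ^ (k + 1) * s|))
  have hle : γ + p ^ k * i ≤ α + p ^ (k + 1) * s := by
    have := abs_le_pow_mul (p := p) (le_neg_of_le_neg hi) k
    linarith [le_abs_self (γ - α - p ^ (k + 1) * s)]
  have h := T.digitSum hle
  rw [show α + (p : ℤ) ^ (k + 1) * s + (γ + p ^ k * i) = α + γ + p ^ k * (p * s + i) by ring] at h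
  have hu := h.unitSum
  rw [R.right i (hie ▸ he), R.sum _ (by simpa [hie] using he)] at hu
  simpa only [map_mul, map_intCast, hie] using hu.firstDigit_summand (t := κ * (s : ZMod (p ^ 2)))
    (by push_cast; ring) (R.firstDigit_mul_ne_zero hs) h.left_valid.unit_ne_zero

theorem firstDigit_right (R : IsResolved A B C k α γ κ) (T : DigitTracks A B C) (h5 : 5 ≤ p) {s : ℤ}
    (hs : (s : ZMod p) ≠ 0) :
    firstDigit p (C (γ + p ^ (k + 1) * s)).unit = firstDigit p κ * s := by
  refine eq_of_two_classes h5 R.firstDigit_ne_zero fun e he ↦ ?_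
  obtain ⟨i, hi, hie⟩ := exists_ge_intCast_eq (e : ZMod p) |γ - α + p ^ (k + 1) * s|
  have hle : γ + p ^ (k + 1) * s ≤ α + p ^ k * i := by
    have := abs_le_pow_mul (p := p) hi k
    linarith [le_abs_self (γ - α + p ^ (k + 1) * s)]
  have h := T.digitSum hle
  rw [show α + p ^ k * i + (γ + (p : ℤ) ^ (k + 1) * s) = α + γ + p ^ k * (p * s + i) by ring] at h
  have hu := h.unitSum.symm
  rw [R.left i (hie ▸ he), R.sum _ (by simpa [hie] using he)] at hu
  simpa only [map_mul, map_intCast, hie] using hu.firstDigit_summand (t := κ * (s : ZMod (p ^ 2)))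
    (by push_cast; ring) (R.firstDigit_mul_ne_zero hs) h.right_valid.unit_ne_zero

theorem additiveOffMultiples (R : IsResolved A B C k α γ κ) (T : DigitTracks A B C) (h5 : 5 ≤ p) :
    AdditiveOffMultiples p |γ - α| (fun i ↦ (A (α + p ^ (k + 1) * i)).unit)
      (fun i ↦ (C (γ + p ^ (k + 1) * i)).unit) (fun i ↦ (B (α + γ + p ^ (k + 1) * i)).unit) := by
  intro i j hi hj hij hL
  have hle : γ + p ^ (k + 1) * j ≤ α + p ^ (k + 1) * i := by
    linarith [le_abs_self (γ - α), abs_le_pow_mul (p := p) hL (k + 1)]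
  have h := T.digitSum hle
  rw [show α + (p : ℤ) ^ (k + 1) * i + (γ + p ^ (k + 1) * j) = α + γ + p ^ (k + 1) * (i + j) by
    ring] at h
  refine (h.unitSum.eq_add h.left_valid.unit_ne_zero h.right_valid.unit_ne_zero
    h.sum_valid.unit_ne_zero ?_).symm
  rw [R.firstDigit_left T h5 hi, R.firstDigit_right T h5 hj, R.firstDigit_sum T h5 hij]
  push_cast
  ring

theorem exists_affine (R : IsResolved A B C k α γ κ) (T : DigitTracks A B C) (h5 : 5 ≤ p) :
    ∃ κ' a c : ZMod (p ^ 2), firstDigit p κ' = firstDigit p κ ∧ firstDigit p a = 0 ∧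
      firstDigit p c = 0 ∧
      (∀ i : ℤ, (i : ZMod p) ≠ 0 → (A (α + p ^ (k + 1) * i)).unit = κ' * i + a) ∧
      (∀ i : ℤ, (i : ZMod p) ≠ 0 → (C (γ + p ^ (k + 1) * i)).unit = κ' * i + c) ∧
      (∀ i : ℤ, (i : ZMod p) ≠ 0 → (B (α + γ + p ^ (k + 1) * i)).unit = κ' * i + (a + c)) := by
  obtain ⟨κ', a, c, hA, hC, hB⟩ := (R.additiveOffMultiples T h5).exists_affine h5
  have h1 : ((1 : ℤ) : ZMod p) ≠ 0 := by simp
  have h2 : ((2 : ℤ) : ZMod p) ≠ 0 := by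
    have h : (2 : ZMod p) ≠ 0 := ofNat_ne_zero_of_lt (by omega)
    exact mod_cast h
  have ha₁ := (congrArg (firstDigit p) (hA 1 h1)).symm.trans (R.firstDigit_left T h5 h1)
  have ha₂ := (congrArg (firstDigit p) (hA 2 h2)).symm.trans (R.firstDigit_left T h5 h2)
  have hc₁ := (congrArg (firstDigit p) (hC 1 h1)).symm.trans (R.firstDigit_right T h5 h1)
  rw [map_add, map_mul, map_intCast] at ha₁ ha₂ hc₁
  push_cast at ha₁ ha₂ hc₁
  have hκ : firstDigit p κ' = firstDigit p κ := by linear_combination ha₂ - ha₁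
  exact ⟨κ', a, c, hκ, by linear_combination ha₁ - hκ, by linear_combination hc₁ - hκ, hA, hC, hB⟩

theorem exists_succ (R : IsResolved A B C k α γ κ) (T : DigitTracks A B C) (h5 : 5 ≤ p) :
    ∃ α' γ' κ', IsResolved A B C (k + 1) α' γ' κ' ∧ (∃ σ, γ' = γ + p ^ (k + 2) * σ) ∧
      firstDigit p κ' = firstDigit p κ := by
  obtain ⟨κ', a, c, hκ, ha, hc, hA, hC, hB⟩ := R.exists_affine T h5
  have hκ' : firstDigit p κ' ≠ 0 := hκ ▸ R.firstDigit_ne_zero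
  obtain ⟨a, rfl⟩ := firstDigit_eq_zero_iff.1 ha
  obtain ⟨c, rfl⟩ := firstDigit_eq_zero_iff.1 hc
  obtain ⟨σ, rfl⟩ := exists_mul_intCast_eq hκ' a
  obtain ⟨τ, rfl⟩ := exists_mul_intCast_eq hκ' c
  refine ⟨α + p ^ (k + 2) * (-σ), γ + p ^ (k + 2) * (-τ), κ',
    ⟨hκ', fun i hi ↦ ?_, fun i hi ↦ ?_, fun i hi ↦ ?_⟩, ⟨-τ, rfl⟩, hκ⟩
  · rw [show α + (p : ℤ) ^ (k + 2) * (-σ) + p ^ (k + 1) * i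
      = α + p ^ (k + 1) * (i - p * σ) by ring, hA _ (by simpa using hi)]
    push_cast
    ring
  · rw [show γ + (p : ℤ) ^ (k + 2) * (-τ) + p ^ (k + 1) * i
      = γ + p ^ (k + 1) * (i - p * τ) by ring, hC _ (by simpa using hi)]
    push_cast
    ring
  · rw [show α + (p : ℤ) ^ (k + 2) * (-σ) + (γ + p ^ (k + 2) * (-τ)) + p ^ (k + 1) * i
      = α + γ + p ^ (k + 1) * (i - p * (σ + τ)) by ring, hB _ (by simpa using hi)]
    push_cast
    ring

end IsResolved

/-- A simultaneous identification of the cells of all levels. -/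
structure Resolution (A B C : ℤ → Digits p) where
  /-- The centre of the cells of a given level on the left-moving track. -/
  leftCentre : ℕ → ℤ
  /-- The centre of the cells of a given level on the right-moving track. -/
  rightCentre : ℕ → ℤ
  /-- The slope of the unit parts along the cells of a given level. -/
  slope : ℕ → ZMod (p ^ 2)
  isResolved : ∀ k, IsResolved A B C k (leftCentre k) (rightCentre k) (slope k)
  left_residue_eq_zero : (A (leftCentre 0)).residue = 0
  right_residue_eq_zero : (C (rightCentre 0)).residue = 0
  rightCentre_succ : ∀ k, ∃ σ, rightCentre (k + 1) = rightCentre k + p ^ (k + 2) * σ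
  firstDigit_slope_succ : ∀ k, firstDigit p (slope (k + 1)) = firstDigit p (slope k)

theorem DigitTracks.nonempty_resolution (T : DigitTracks A B C) (h5 : 5 ≤ p) :
    Nonempty (Resolution A B C) := by
  obtain ⟨α₀, γ₀, κ₀, R₀, hα₀, hγ₀⟩ := T.exists_isResolved_zero h5
  choose α γ κ R hγ hκ using fun (k : ℕ) (α γ : ℤ) (κ : ZMod (p ^ 2))
    (R : IsResolved A B C k α γ κ) ↦ R.exists_succ T h5
  let level : (k : ℕ) → {c : ℤ × ℤ × ZMod (p ^ 2) // IsResolved A B C k c.1 c.2.1 c.2.2} :=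
    Nat.rec ⟨(α₀, γ₀, κ₀), R₀⟩ fun k c ↦
      ⟨(α k _ _ _ c.2, γ k _ _ _ c.2, κ k _ _ _ c.2), R k _ _ _ c.2⟩
  exact ⟨⟨fun k ↦ (level k).1.1, fun k ↦ (level k).1.2.1, fun k ↦ (level k).1.2.2,
    fun k ↦ (level k).2, hα₀, hγ₀, fun k ↦ hγ k _ _ _ (level k).2, fun k ↦ hκ k _ _ _ (level k).2⟩⟩

namespace Resolution

/-- The cells of level `k` of the left-moving track. -/
def leftLevel (R : Resolution A B C) (k : ℕ) : Set ℤ :=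
  {u | ∃ i : ℤ, (i : ZMod p) ≠ 0 ∧ u = R.leftCentre k + p ^ k * i}

/-- The cells of level `k` of the right-moving track. -/
def rightLevel (R : Resolution A B C) (k : ℕ) : Set ℤ :=
  {w | ∃ i : ℤ, (i : ZMod p) ≠ 0 ∧ w = R.rightCentre k + p ^ k * i}

variable (R : Resolution A B C) {k : ℕ} {u w : ℤ}

theorem containsProgression_leftLevel (k : ℕ) : ContainsProgression p (R.leftLevel k) :=
  ⟨k + 1, R.leftCentre k + p ^ k, fun t ↦ ⟨1 + p * t, by simp, by ring⟩⟩

theorem firstDigit_left_residue_ne_zero (T : DigitTracks A B C) (h5 : 5 ≤ p)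
    (hu : u ∈ R.leftLevel 0) : firstDigit p (A u).residue ≠ 0 := by
  obtain ⟨i, hi, rfl⟩ := hu
  have h := eq_zero_add_mul_of_step (g := fun u ↦ (A u).residue) T.left_residue
  have h4 : (4 : ZMod p) ≠ 0 := ofNat_ne_zero_of_lt (by omega)
  rw [h]
  push_cast
  rw [pow_zero, one_mul, add_mul, ← add_assoc, ← h, R.left_residue_eq_zero, zero_add, map_mul,
    map_intCast, map_ofNat]
  exact mul_ne_zero hi h4

theorem firstDigit_right_residue_ne_zero (T : DigitTracks A B C) (h5 : 5 ≤ p)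
    (hw : w ∈ R.rightLevel 0) : firstDigit p (C w).residue ≠ 0 := by
  obtain ⟨i, hi, rfl⟩ := hw
  have h := eq_zero_add_mul_of_step (g := fun w ↦ (C w).residue) T.right_residue
  have h4 : (4 : ZMod p) ≠ 0 := ofNat_ne_zero_of_lt (by omega)
  rw [h]
  push_cast
  rw [pow_zero, one_mul, add_mul, ← add_assoc, ← h, R.right_residue_eq_zero, zero_add, map_mul,
    map_intCast, map_ofNat]
  exact mul_ne_zero hi h4

theorem sameLevel {i j : ℤ} (hi : (i : ZMod p) ≠ 0) (hj : (j : ZMod p) ≠ 0)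
    (hij : ((i + j : ℤ) : ZMod p) ≠ 0) :
    SameLevel (A (R.leftCentre k + p ^ k * i)).unit (C (R.rightCentre k + p ^ k * j)).unit
      (B (R.leftCentre k + p ^ k * i + (R.rightCentre k + p ^ k * j))).unit := by
  rw [SameLevel, (R.isResolved k).left i hi, (R.isResolved k).right j hj,
    show R.leftCentre k + (p : ℤ) ^ k * i + (R.rightCentre k + p ^ k * j)
      = R.leftCentre k + R.rightCentre k + p ^ k * (i + j) by ring, (R.isResolved k).sum _ hij]
  push_cast
  ring

theorem containsProgression_sameLevel_left (h5 : 5 ≤ p) (hw : w ∈ R.rightLevel k) :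
    ContainsProgression p
      {u | u ∈ R.leftLevel k ∧ SameLevel (A u).unit (C w).unit (B (u + w)).unit} := by
  obtain ⟨j, hj, rfl⟩ := hw
  refine ⟨k + 1, R.leftCentre k + p ^ k * j, fun t ↦ ?_⟩
  rw [show R.leftCentre k + (p : ℤ) ^ k * j + p ^ (k + 1) * t
    = R.leftCentre k + p ^ k * (j + p * t) by ring]
  have hjt : ((j + p * t : ℤ) : ZMod p) ≠ 0 := by simpa using hj
  have h2 : (2 : ZMod p) ≠ 0 := ofNat_ne_zero_of_lt (by omega)
  refine ⟨⟨_, hjt, rfl⟩, R.sameLevel hjt hj ?_⟩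
  simpa [← two_mul] using And.intro h2 hj

theorem containsProgression_sameLevel_right (h5 : 5 ≤ p) (hu : u ∈ R.leftLevel k) :
    ContainsProgression p
      {w | w ∈ R.rightLevel k ∧ SameLevel (A u).unit (C w).unit (B (u + w)).unit} := by
  obtain ⟨i, hi, rfl⟩ := hu
  refine ⟨k + 1, R.rightCentre k + p ^ k * i, fun t ↦ ?_⟩
  rw [show R.rightCentre k + (p : ℤ) ^ k * i + p ^ (k + 1) * t
    = R.rightCentre k + p ^ k * (i + p * t) by ring]
  have hit : ((i + p * t : ℤ) : ZMod p) ≠ 0 := by simpa using hi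
  have h2 : (2 : ZMod p) ≠ 0 := ofNat_ne_zero_of_lt (by omega)
  refine ⟨⟨_, hit, rfl⟩, R.sameLevel hi hit ?_⟩
  simpa [← two_mul] using And.intro h2 hi

theorem nextLevel {i j : ℤ} (hi : (i : ZMod p) ≠ 0) (hj : (j : ZMod p) ≠ 0)
    (hadd : ((i + j : ℤ) : ZMod p) ≠ 0) (hsub : ((i - j : ℤ) : ZMod p) ≠ 0) :
    NextLevel (A (R.leftCentre k + p ^ k * i)).unit
      (C (R.rightCentre (k + 1) + p ^ (k + 1) * j)).unit
      (B (R.leftCentre k + p ^ k * i + (R.rightCentre (k + 1) + p ^ (k + 1) * j))).unit := by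
  obtain ⟨σ, hσ⟩ := R.rightCentre_succ k
  have hB : (B (R.leftCentre k + p ^ k * i + (R.rightCentre (k + 1) + p ^ (k + 1) * j))).unit
      = R.slope k * i + p * (R.slope k * j) := by
    rw [hσ, show R.leftCentre k + (p : ℤ) ^ k * i
        + (R.rightCentre k + p ^ (k + 2) * σ + p ^ (k + 1) * j)
      = R.leftCentre k + R.rightCentre k + p ^ k * (i + p * (j + p * σ)) by ring,
      (R.isResolved k).sum _ (by simpa using hi)]
    have hpp : (p : ZMod (p ^ 2)) * p = 0 := by
      rw [← pow_two, ← Nat.cast_pow, ZMod.natCast_self]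
    push_cast
    linear_combination R.slope k * σ * hpp
  have hdigit {n : ℤ} (hn : (n : ZMod p) ≠ 0) := (R.isResolved k).firstDigit_mul_ne_zero hn
  rw [NextLevel, hB, (R.isResolved k).left i hi, (R.isResolved (k + 1)).right j hj,
    add_right_inj, natCast_mul_eq_natCast_mul_iff]
  simp only [map_mul, R.firstDigit_slope_succ, map_intCast, ← mul_add, ← mul_sub, true_and]
  exact ⟨by simpa using hdigit hadd, by simpa using hdigit hsub⟩

theorem containsProgression_nextLevel (h5 : 5 ≤ p) (hw : w ∈ R.rightLevel (k + 1)) :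
    ContainsProgression p
      {u | u ∈ R.leftLevel k ∧ NextLevel (A u).unit (C w).unit (B (u + w)).unit} := by
  obtain ⟨j, hj, rfl⟩ := hw
  refine ⟨k + 1, R.leftCentre k + p ^ k * (2 * j), fun t ↦ ?_⟩
  rw [show R.leftCentre k + (p : ℤ) ^ k * (2 * j) + p ^ (k + 1) * t
    = R.leftCentre k + p ^ k * (2 * j + p * t) by ring]
  have h2 : (2 : ZMod p) ≠ 0 := ofNat_ne_zero_of_lt (by omega)
  have h3 : (3 : ZMod p) ≠ 0 := ofNat_ne_zero_of_lt (by omega)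
  have hi : ((2 * j + p * t : ℤ) : ZMod p) ≠ 0 := by simpa using And.intro h2 hj
  refine ⟨⟨_, hi, rfl⟩, R.nextLevel hi hj ?_ ?_⟩ <;> push_cast <;> rw [ZMod.natCast_self, zero_mul]
  · rw [show 2 * (j : ZMod p) + 0 + j = 3 * j by ring]
    exact mul_ne_zero h3 hj
  · rwa [show 2 * (j : ZMod p) + 0 - j = j by ring]

end Resolution

end Resolution

section Tilings

/-- The prime whose adic valuation represents the counter with index `i`. The primes `2` and `3` are
left out since the rigidity of the digits needs a few invertible residues. -/
noncomputable def counterPrime (i : ℕ) : ℕ := Nat.nth Nat.Prime (i + 2)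

instance (i : ℕ) : Fact (counterPrime i).Prime :=
  ⟨Nat.nth_mem_of_infinite Nat.infinite_setOfPred_prime _⟩

theorem counterPrime_pos (i : ℕ) : 0 < counterPrime i := (Fact.out : (counterPrime i).Prime).pos

theorem five_le_counterPrime (i : ℕ) : 5 ≤ counterPrime i :=
  Nat.nth_prime_two_eq_five.symm.le.trans
    (Nat.nth_monotone Nat.infinite_setOfPred_prime (Nat.le_add_left 2 i))

theorem coprime_counterPrime {i j : ℕ} (hij : i ≠ j) :
    (counterPrime i).Coprime (counterPrime j) :=
  (Nat.coprime_primes Fact.out Fact.out).2 fun h ↦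
    hij (Nat.add_right_cancel (Nat.nth_injective Nat.infinite_setOfPred_prime h))

theorem containsProgression_iInter_counterPrime {ι : Type*} [Fintype ι] {e : ι → ℕ}
    (he : Function.Injective e) {U : ι → Set ℤ}
    (hU : ∀ i, ContainsProgression (counterPrime (e i)) (U i)) :
    ContainsProgression (∏ i, counterPrime (e i)) (⋂ i, U i) :=
  .iInter (fun i ↦ counterPrime_pos (e i)) (fun _ _ hij ↦ coprime_counterPrime (he.ne hij)) hU

/-- Digits of an integer for each of the primes that represent counters. -/
abbrev DigitVector (k : ℕ) : Type := ∀ i : Fin (k + 1), Digits (counterPrime i)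

/-- A certificate, in the coordinate with index `i`, that the action leads from the levels of an
integer with digits `a` to the levels of an integer with digits `c`; `b` are the digits of the sum
of the two integers. -/
def CertifiesAt (i : ℕ) {p : ℕ} (a c b : Digits p) : Action → Prop
  | .stay => SameLevel a.unit c.unit b.unit
  | .succ j => if i = j then NextLevel a.unit c.unit b.unit else SameLevel a.unit c.unit b.unit
  | .forget j => i ≠ j → SameLevel a.unit c.unit b.unit
  | .zero j => SameLevel a.unit c.unit b.unit ∧ (i = j → firstDigit p a.residue ≠ 0)

/-- What a cell of a moving track records about an integer `N`, except for the counter. -/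
@[ext]
structure Label (Q : Type) (k : ℕ) where
  digits : DigitVector k
  /-- The symbols derivable at the levels of `N`. -/
  facts : Set Q

/-- What the three tracks record when the integers `X` and `Y` of the moving tracks meet at their
sum `X + Y`. -/
@[ext]
structure Meeting (Q : Type) (k : ℕ) where
  left : Label Q k
  sum : DigitVector k
  right : Label Q k

namespace Meeting

variable {Q : Type} {k : ℕ}

/-- A certificate that the action leads from the levels of `X` to the levels of `Y`. -/
def Certifies (m : Meeting Q k) (a : Action) : Prop :=
  ∀ i : Fin (k + 1), CertifiesAt i (m.left.digits i) (m.right.digits i) (m.sum i) a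

/-- The labels respect addition and the clauses. -/
structure IsConsistent (S : Set (Clause Q)) (m : Meeting Q k) : Prop where
  digitSum : ∀ i, DigitSum (m.left.digits i) (m.right.digits i) (m.sum i)
  head_mem : ∀ c ∈ S, m.Certifies c.act → c.body ⊆ m.left.facts → c.head ∈ m.right.facts
  facts_eq : m.Certifies .stay → m.left.facts = m.right.facts

/-- The values `a` and `c` carried by the moving tracks respect the counter with index `0`, capped
at `n + 1`, and the symbol `P` is not derived where this counter has the value `n`. -/
structure CounterRule (P : Q) (n : ℕ) (m : Meeting Q k) (a c : ℕ) : Prop where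
  left_eq_zero : firstDigit _ (m.left.digits 0).residue ≠ 0 → a = 0
  right_eq_zero : firstDigit _ (m.right.digits 0).residue ≠ 0 → c = 0
  eq_of_sameLevel : SameLevel (m.left.digits 0).unit (m.right.digits 0).unit (m.sum 0).unit → a = c
  eq_of_nextLevel : NextLevel (m.left.digits 0).unit (m.right.digits 0).unit (m.sum 0).unit →
    c = min (a + 1) (n + 1)
  ne_of_mem : P ∈ m.left.facts → a ≠ n

/-- On the moving tracks, the integers of neighbouring cells differ by `2`. -/
structure Precedes (m m' : Meeting Q k) : Prop where
  left_residue : ∀ i, (m'.left.digits i).residue = (m.left.digits i).residue + 2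
  right_residue : ∀ i, (m'.right.digits i).residue = (m.right.digits i).residue + 2

end Meeting

/-- A cell of a moving track: a label and the value of a counter. -/
abbrev Cell (Q : Type) (k : ℕ) : Type := Label Q k × ℕ

/-- The states of the automaton, apart from the blank one: one cell on each of the three tracks. -/
abbrev State (Q : Type) (k : ℕ) : Type := Cell Q k × DigitVector k × Cell Q k

/-- The information on the three tracks apart from the counters. -/
def State.meeting {Q : Type} {k : ℕ} (s : State Q k) : Meeting Q k := ⟨s.1.1, s.2.1, s.2.2.1⟩

/-- The state `s` may have the right neighbour `t`. -/
structure Allowed {Q : Type} {k : ℕ} (S : Set (Clause Q)) (P : Q) (n : ℕ) (s t : State Q k) :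
    Prop where
  isConsistent : s.meeting.IsConsistent S
  counterRule : s.meeting.CounterRule P n s.1.2 s.2.2.2
  precedes : s.meeting.Precedes t.meeting

/-- The space-time diagram in which `A` moves to the left, `B` stays at rest and `C` moves to the
right respects the neighbourhood relation `r`. -/
def IsTiling {α β γ : Type*} (r : α × β × γ → α × β × γ → Prop) (A : ℤ → α) (B : ℤ → β)
    (C : ℤ → γ) : Prop :=
  ∀ (x : ℤ) (t : ℕ), r (A (x + t), B x, C (x - t)) (A (x + 1 + t), B (x + 1), C (x + 1 - t))

/-- The even cells of the moving tracks of a tiling, together with the middle track: the cells `u`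
and `w` of the moving tracks, once past each other, meet at the cell `u + w` of the middle track. -/
structure MeetingTracks {Q : Type} {k : ℕ} (S : Set (Clause Q)) (P : Q) (n : ℕ) (A : ℤ → Cell Q k)
    (B : ℤ → DigitVector k) (C : ℤ → Cell Q k) : Prop where
  isConsistent : ∀ {u w : ℤ}, w ≤ u → Meeting.IsConsistent S ⟨(A u).1, B (u + w), (C w).1⟩
  counterRule : ∀ {u w : ℤ}, w ≤ u →
    Meeting.CounterRule P n ⟨(A u).1, B (u + w), (C w).1⟩ (A u).2 (C w).2
  left_residue : ∀ i u, ((A (u + 1)).1.digits i).residue = ((A u).1.digits i).residue + 4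
  right_residue : ∀ i w, ((C (w + 1)).1.digits i).residue = ((C w).1.digits i).residue + 4

variable {Q : Type} {k n : ℕ} {S : Set (Clause Q)} {P : Q} {A : ℤ → Cell Q k}
  {B : ℤ → DigitVector k} {C : ℤ → Cell Q k}

theorem IsTiling.meetingTracks (h : IsTiling (Allowed S P n) A B C) :
    MeetingTracks S P n (fun u ↦ A (2 * u)) B (fun w ↦ C (2 * w)) := by
  have hmeet {u w : ℤ} (hwu : w ≤ u) : ∃ t : State Q k,
      Allowed S P n (A (2 * u), B (u + w), C (2 * w)) t := by
    have := h (u + w) (u - w).toNat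
    rw [Int.toNat_of_nonneg (by omega), show u + w + (u - w) = 2 * u by ring,
      show u + w - (u - w) = 2 * w by ring] at this
    exact ⟨_, this⟩
  have hA (i) (x : ℤ) : ((A (x + 1)).1.digits i).residue = ((A x).1.digits i).residue + 2 := by
    simpa [State.meeting] using (h x 0).precedes.left_residue i
  have hC (i) (x : ℤ) : ((C (x + 1)).1.digits i).residue = ((C x).1.digits i).residue + 2 := by
    simpa [State.meeting] using (h x 0).precedes.right_residue i
  refine ⟨fun hwu ↦ (hmeet hwu).choose_spec.isConsistent,
    fun hwu ↦ (hmeet hwu).choose_spec.counterRule, fun i u ↦ ?_, fun i w ↦ ?_⟩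
  · rw [show 2 * (u + 1) = 2 * u + 1 + 1 by ring, hA, hA, add_assoc, two_add_two_eq_four]
  · rw [show 2 * (w + 1) = 2 * w + 1 + 1 by ring, hC, hC, add_assoc, two_add_two_eq_four]

theorem containsProgression_certifiesAt {p : ℕ} [Fact p.Prime] {A B C : ℤ → Digits p}
    (R : Resolution A B C) (T : DigitTracks A B C) (h5 : 5 ≤ p) {a : Action} {v v' : ℕ → ℕ}
    (ha : a.App v v') (i : ℕ) {w : ℤ} (hw : w ∈ R.rightLevel (v' i)) :
    ContainsProgression p
      {u | u ∈ R.leftLevel (v i) ∧ CertifiesAt i (A u) (C w) (B (u + w)) a} := by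
  cases a with
  | stay =>
    obtain rfl : v' = v := ha
    exact R.containsProgression_sameLevel_left h5 hw
  | succ j =>
    obtain rfl : v' = Function.update v j (v j + 1) := ha
    rcases eq_or_ne i j with rfl | hij
    · rw [Function.update_self] at hw
      simpa only [CertifiesAt, if_true] using R.containsProgression_nextLevel h5 hw
    · rw [Function.update_of_ne hij] at hw
      simpa only [CertifiesAt, if_neg hij] using R.containsProgression_sameLevel_left h5 hw
  | forget j =>
    obtain ⟨b, rfl⟩ : ∃ b, v' = Function.update v j b := ha
    rcases eq_or_ne i j with rfl | hij
    · simpa [CertifiesAt] using R.containsProgression_leftLevel (v i)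
    · rw [Function.update_of_ne hij] at hw
      simpa only [CertifiesAt, ne_eq, hij, not_false_eq_true, true_imp_iff] using
        R.containsProgression_sameLevel_left h5 hw
  | zero j =>
    obtain ⟨hv, rfl⟩ : v j = 0 ∧ v' = v := ha
    obtain ⟨m, r, hr⟩ := R.containsProgression_sameLevel_left h5 hw
    refine ⟨m, r, fun t ↦ ⟨(hr t).1, (hr t).2, ?_⟩⟩
    rintro rfl
    exact R.firstDigit_left_residue_ne_zero T h5 (hv ▸ (hr t).1)

namespace MeetingTracks

variable (M : MeetingTracks S P n A B C)

include M in
theorem digitTracks (i : Fin (k + 1)) : DigitTracks (fun u ↦ (A u).1.digits i) (fun x ↦ B x i)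
    (fun w ↦ (C w).1.digits i) :=
  ⟨fun hwu ↦ (M.isConsistent hwu).digitSum i, M.left_residue i, M.right_residue i⟩

variable (R : ∀ i : Fin (k + 1), Resolution (fun u ↦ (A u).1.digits i) (fun x ↦ B x i)
  (fun w ↦ (C w).1.digits i))

include M

theorem mem_facts {q : Q} {v : ℕ → ℕ} (hq : Derivable S q v) {u : ℤ}
    (hu : ∀ i, u ∈ (R i).leftLevel (v i)) : q ∈ (A u).1.facts := by
  have hpos : 0 < ∏ i : Fin (k + 1), counterPrime i :=
    Finset.prod_pos fun i _ ↦ counterPrime_pos i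
  induction hq generalizing u with
  | @mk c v v' hc _ hact ih =>
    have hstay := containsProgression_iInter_counterPrime Fin.val_injective fun i ↦
      (R i).containsProgression_sameLevel_right (five_le_counterPrime i) (hu i)
    obtain ⟨w, hw, hwu⟩ := hstay.exists_le hpos u
    rw [Set.mem_iInter] at hw
    rw [(M.isConsistent hwu).facts_eq fun i ↦ (hw i).2]
    have hbody := containsProgression_iInter_counterPrime Fin.val_injective fun i ↦
      containsProgression_certifiesAt (R i) (M.digitTracks i) (five_le_counterPrime i) hact i
        (hw i).1
    obtain ⟨u', hu', hwu'⟩ := hbody.exists_ge hpos w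
    rw [Set.mem_iInter] at hu'
    exact (M.isConsistent hwu').head_mem c hc (fun i ↦ (hu' i).2)
      fun b hb ↦ ih b hb fun i ↦ (hu' i).1

theorem counter_eq (v : ℕ) : (∀ w ∈ (R 0).rightLevel v, (C w).2 = min v (n + 1)) ∧
    ∀ u ∈ (R 0).leftLevel v, (A u).2 = min v (n + 1) := by
  have h5 := five_le_counterPrime (0 : Fin (k + 1))
  have hpos := counterPrime_pos (0 : Fin (k + 1))
  induction v with
  | zero =>
    rw [Nat.zero_min]
    exact ⟨fun w hw ↦ (M.counterRule le_rfl).right_eq_zero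
        ((R 0).firstDigit_right_residue_ne_zero (M.digitTracks 0) h5 hw),
      fun u hu ↦ (M.counterRule le_rfl).left_eq_zero
        ((R 0).firstDigit_left_residue_ne_zero (M.digitTracks 0) h5 hu)⟩
  | succ v ih =>
    have hright : ∀ w ∈ (R 0).rightLevel (v + 1), (C w).2 = min (v + 1) (n + 1) := by
      intro w hw
      obtain ⟨u, ⟨hu, hnext⟩, hwu⟩ := ((R 0).containsProgression_nextLevel h5 hw).exists_ge hpos w
      rw [(M.counterRule hwu).eq_of_nextLevel hnext, ih.2 u hu]
      omega
    refine ⟨hright, fun u hu ↦ ?_⟩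
    obtain ⟨w, ⟨hw, hsame⟩, hwu⟩ :=
      ((R 0).containsProgression_sameLevel_right h5 hu).exists_le hpos u
    rw [(M.counterRule hwu).eq_of_sameLevel hsame, hright w hw]

theorem not_derivable {v : ℕ → ℕ} (hv : v 0 = n) : ¬ Derivable S P v := by
  intro hP
  have R i := ((M.digitTracks i).nonempty_resolution (five_le_counterPrime i)).some
  obtain ⟨u, hu, -⟩ := (containsProgression_iInter_counterPrime Fin.val_injective fun i ↦
    (R i).containsProgression_leftLevel (v i)).exists_ge
      (Finset.prod_pos fun i _ ↦ counterPrime_pos i) 0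
  rw [Set.mem_iInter] at hu
  refine (M.counterRule le_rfl).ne_of_mem (M.mem_facts R hP hu) ?_
  rw [(M.counter_eq R n).2 u (by simpa [hv] using hu 0), min_eq_left (Nat.le_succ n)]

end MeetingTracks

end Tilings

section Levels

/-- The part of an integer coprime to `p`; it is `0` for the integer `0`. -/
def unitPart (p : ℕ) (N : ℤ) : ℤ := N / p ^ padicValInt p N

theorem pow_mul_unitPart (p : ℕ) (N : ℤ) : (p : ℤ) ^ padicValInt p N * unitPart p N = N :=
  Int.mul_ediv_cancel' (padicValInt_dvd N)

theorem natCast_pow_eq_zero {p d : ℕ} (hd : 2 ≤ d) : (p : ZMod (p ^ 2)) ^ d = 0 :=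
  pow_eq_zero_of_le hd (by rw [← Nat.cast_pow, ZMod.natCast_self])

theorem unitPart_eq_self {p : ℕ} {N : ℤ} (hN : ¬ (p : ℤ) ∣ N) : unitPart p N = N := by
  rw [unitPart, padicValInt.eq_zero_of_not_dvd hN, pow_zero, Int.ediv_one]

variable {p : ℕ} [hp : Fact p.Prime] {X Y N : ℤ}

theorem not_dvd_unitPart (hN : N ≠ 0) : ¬ (p : ℤ) ∣ unitPart p N := by
  intro h
  have hdvd : (p : ℤ) ^ (padicValInt p N + 1) ∣ N := by
    conv_rhs => rw [← pow_mul_unitPart p N]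
    rw [pow_succ]
    exact mul_dvd_mul_left _ h
  rcases (padicValInt_dvd_iff _ _).1 hdvd with h0 | hle
  · exact hN h0
  · omega

theorem padicValInt_pow_mul (a : ℕ) (hN : N ≠ 0) :
    padicValInt p (p ^ a * N) = a + padicValInt p N := by
  induction a with
  | zero => simp
  | succ a ih =>
    have hpa : (p : ℤ) ^ a ≠ 0 := pow_ne_zero _ (mod_cast hp.1.ne_zero)
    rw [pow_succ, mul_right_comm, padicValInt_mul_eq_succ _ (mul_ne_zero hpa hN), ih]
    omega

theorem unitPart_pow_mul (a : ℕ) (hN : N ≠ 0) : unitPart p (p ^ a * N) = unitPart p N := by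
  have hp0 : (p : ℤ) ≠ 0 := mod_cast hp.1.ne_zero
  rw [unitPart, padicValInt_pow_mul a hN, pow_add, Int.mul_ediv_mul_of_pos _ _ (by positivity),
    unitPart]

theorem unitPart_add_of_lt (hX : X ≠ 0) (h : padicValInt p X < padicValInt p Y) :
    unitPart p (X + Y) = unitPart p X + p ^ (padicValInt p Y - padicValInt p X) * unitPart p Y := by
  obtain ⟨d, hd⟩ := Nat.exists_eq_add_of_lt h
  have hsum : ¬ (p : ℤ) ∣ unitPart p X + p ^ (d + 1) * unitPart p Y := fun hdvd ↦
    not_dvd_unitPart hX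
      ((dvd_add_left ((dvd_pow_self _ d.succ_ne_zero).mul_right _)).1 hdvd)
  have hXY : X + Y
      = p ^ padicValInt p X * (unitPart p X + p ^ (d + 1) * unitPart p Y) := by
    conv_lhs => rw [← pow_mul_unitPart p X, ← pow_mul_unitPart p Y, hd]
    ring
  rw [hXY, unitPart_pow_mul _ fun h ↦ hsum (by rw [h]; exact dvd_zero _), unitPart_eq_self hsum,
    show padicValInt p Y - padicValInt p X = d + 1 by omega]

theorem exists_unitPart_add_unitPart_eq (h : padicValInt p X = padicValInt p Y) (hXY : X + Y ≠ 0) :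
    ∃ d, unitPart p X + unitPart p Y = p ^ d * unitPart p (X + Y) := by
  have hsum : X + Y = p ^ padicValInt p X * (unitPart p X + unitPart p Y) := by
    conv_lhs => rw [← pow_mul_unitPart p X, ← pow_mul_unitPart p Y, ← h]
    ring
  refine ⟨padicValInt p (unitPart p X + unitPart p Y), ?_⟩
  rw [hsum, unitPart_pow_mul _ (right_ne_zero_of_mul (hsum ▸ hXY)), pow_mul_unitPart]

/-- The digits of an integer. -/
def Digits.ofInt (p : ℕ) (N : ℤ) : Digits p := ⟨N, unitPart p N⟩

theorem firstDigit_intCast_ne_zero_iff : firstDigit p (N : ZMod (p ^ 2)) ≠ 0 ↔ ¬ (p : ℤ) ∣ N := by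
  rw [map_intCast, Ne, ZMod.intCast_zmod_eq_zero_iff_dvd]

theorem padicValInt_eq_zero_of_residue (h : firstDigit p (Digits.ofInt p N).residue ≠ 0) :
    padicValInt p N = 0 :=
  padicValInt.eq_zero_of_not_dvd (firstDigit_intCast_ne_zero_iff.1 h)

theorem Digits.valid_ofInt (hN : N ≠ 0) : (Digits.ofInt p N).Valid where
  unit_ne_zero := firstDigit_intCast_ne_zero_iff.2 (not_dvd_unitPart hN)
  unit_eq_residue h :=
    congrArg Int.cast (unitPart_eq_self (firstDigit_intCast_ne_zero_iff.1 h))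

theorem UnitSum.of_lt (hX : X ≠ 0) (h : padicValInt p X < padicValInt p Y) :
    UnitSum (unitPart p X) (unitPart p Y) (unitPart p (X + Y) : ZMod (p ^ 2)) := by
  have hsum := congrArg (Int.cast : ℤ → ZMod (p ^ 2)) (unitPart_add_of_lt hX h)
  push_cast at hsum
  rcases (by omega : padicValInt p Y - padicValInt p X = 1 ∨
    2 ≤ padicValInt p Y - padicValInt p X) with hd | hd
  · rw [hd, pow_one] at hsum
    exact .inr (.inl hsum)
  · rw [natCast_pow_eq_zero hd, zero_mul, add_zero] at hsum
    exact .inl hsum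

theorem unitSum_unitPart (hX : X ≠ 0) (hY : Y ≠ 0) (hXY : X + Y ≠ 0) :
    UnitSum (unitPart p X) (unitPart p Y) (unitPart p (X + Y) : ZMod (p ^ 2)) := by
  rcases lt_trichotomy (padicValInt p X) (padicValInt p Y) with h | h | h
  · exact .of_lt hX h
  · obtain ⟨d, hd⟩ := exists_unitPart_add_unitPart_eq h hXY
    have hsum := congrArg (Int.cast : ℤ → ZMod (p ^ 2)) hd
    push_cast at hsum
    unfold UnitSum
    rcases (by omega : d = 0 ∨ d = 1 ∨ 2 ≤ d) with rfl | rfl | hd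
    · rw [pow_zero, one_mul] at hsum
      simp only [hsum, true_or, or_true]
    · rw [pow_one] at hsum
      simp only [hsum, true_or, or_true]
    · rw [natCast_pow_eq_zero hd, zero_mul] at hsum
      simp only [hsum, or_true]
  · exact add_comm X Y ▸ (UnitSum.of_lt hY h).symm

theorem digitSum_ofInt (hX : X ≠ 0) (hY : Y ≠ 0) (hXY : X + Y ≠ 0) :
    DigitSum (.ofInt p X) (.ofInt p Y) (.ofInt p (X + Y)) where
  left_valid := Digits.valid_ofInt hX
  right_valid := Digits.valid_ofInt hY
  sum_valid := Digits.valid_ofInt hXY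
  residue_add := (Int.cast_add X Y).symm
  unitSum := unitSum_unitPart hX hY hXY

theorem firstDigit_unitPart_add_of_lt (hX : X ≠ 0) (h : padicValInt p X < padicValInt p Y) :
    firstDigit p (unitPart p (X + Y)) = firstDigit p (unitPart p X) := by
  rw [unitPart_add_of_lt hX h]
  push_cast
  rw [map_add, map_mul, map_pow, map_natCast, ZMod.natCast_self,
    zero_pow (Nat.sub_ne_zero_of_lt h), zero_mul, add_zero]

theorem SameLevel.padicValInt_le (hX : X ≠ 0) (hY : Y ≠ 0)
    (h : SameLevel (unitPart p X) (unitPart p Y) (unitPart p (X + Y) : ZMod (p ^ 2))) :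
    padicValInt p Y ≤ padicValInt p X := by
  by_contra! hlt
  have hsum := (congrArg (firstDigit p) h).symm.trans (firstDigit_unitPart_add_of_lt hX hlt)
  rw [map_add, add_eq_left] at hsum
  exact firstDigit_intCast_ne_zero_iff.2 (not_dvd_unitPart hY) hsum

theorem SameLevel.padicValInt_eq (hX : X ≠ 0) (hY : Y ≠ 0)
    (h : SameLevel (unitPart p X) (unitPart p Y) (unitPart p (X + Y) : ZMod (p ^ 2))) :
    padicValInt p X = padicValInt p Y := by
  have h' : SameLevel (unitPart p Y) (unitPart p X) (unitPart p (Y + X) : ZMod (p ^ 2)) := by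
    rw [add_comm Y X, SameLevel, add_comm (unitPart p Y : ZMod (p ^ 2))]
    exact h
  exact le_antisymm (h'.padicValInt_le hY hX) (h.padicValInt_le hX hY)

theorem NextLevel.padicValInt_eq (hX : X ≠ 0) (hY : Y ≠ 0) (hXY : X + Y ≠ 0)
    (h : NextLevel (unitPart p X) (unitPart p Y) (unitPart p (X + Y) : ZMod (p ^ 2))) :
    padicValInt p Y = padicValInt p X + 1 := by
  obtain ⟨hz, hadd, hsub⟩ := h
  have hy := firstDigit_intCast_ne_zero_iff.2 (not_dvd_unitPart (p := p) hY)
  have hz₁ := congrArg (firstDigit p) hz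
  rw [map_add, firstDigit_natCast_mul, add_zero] at hz₁
  rcases lt_trichotomy (padicValInt p X) (padicValInt p Y) with h | h | h
  · by_contra hne
    rw [unitPart_add_of_lt hX h] at hz
    push_cast at hz
    rw [natCast_pow_eq_zero (by omega), zero_mul, add_right_inj, eq_comm,
      natCast_mul_eq_zero_iff] at hz
    exact hy hz
  · obtain ⟨d, hd⟩ := exists_unitPart_add_unitPart_eq h hXY
    have hsum := congrArg (fun N : ℤ ↦ firstDigit p N) hd
    push_cast at hsum
    rw [map_add, map_mul, map_pow, map_natCast, ZMod.natCast_self, hz₁] at hsum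
    rcases Nat.eq_zero_or_pos d with rfl | hd
    · rw [pow_zero, one_mul, add_eq_left] at hsum
      exact absurd hsum hy
    · rw [zero_pow hd.ne', zero_mul] at hsum
      exact absurd hsum hadd
  · rw [add_comm X Y, firstDigit_unitPart_add_of_lt hY h] at hz₁
    exact absurd (sub_eq_zero.2 hz₁.symm) hsub

end Levels

section Existence

/-- The valuation of counters represented by an integer. -/
noncomputable def levels (k : ℕ) (N : ℤ) (i : ℕ) : ℕ :=
  if i < k + 1 then padicValInt (counterPrime i) N else 0

theorem levels_val {k : ℕ} (N : ℤ) (i : Fin (k + 1)) :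
    levels k N i = padicValInt (counterPrime i) N :=
  if_pos i.2

theorem levels_congr {k : ℕ} {X Y : ℤ} {j : ℕ} (h : ∀ i : Fin (k + 1), i = j →
    padicValInt (counterPrime i) X = padicValInt (counterPrime i) Y) :
    levels k X j = levels k Y j := by
  unfold levels
  split_ifs with hj
  · exact h ⟨j, hj⟩ rfl
  · rfl

variable {Q : Type} {k n : ℕ} {S : Set (Clause Q)} {P : Q} {X Y : ℤ}

/-- The correct label of an integer. -/
noncomputable def Label.ofInt (S : Set (Clause Q)) (k : ℕ) (N : ℤ) : Label Q k where
  digits i := .ofInt (counterPrime i) N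
  facts := {q | Derivable S q (levels k N)}

/-- The correct information where the integers `X` and `Y` meet. -/
noncomputable def Meeting.ofInt (S : Set (Clause Q)) (k : ℕ) (X Y : ℤ) : Meeting Q k where
  left := .ofInt S k X
  sum i := .ofInt (counterPrime i) (X + Y)
  right := .ofInt S k Y

namespace Meeting

theorem app_of_certifies (hX : X ≠ 0) (hY : Y ≠ 0) (hXY : X + Y ≠ 0) {a : Action}
    (ha : a.BoundedBy (k + 1)) (h : (ofInt S k X Y).Certifies a) :
    a.App (levels k X) (levels k Y) := by
  have hsame {i : Fin (k + 1)} (h : SameLevel (Digits.ofInt (counterPrime i) X).unit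
      (Digits.ofInt _ Y).unit (Digits.ofInt _ (X + Y)).unit) :
      padicValInt (counterPrime i) Y = padicValInt (counterPrime i) X :=
    (SameLevel.padicValInt_eq hX hY h).symm
  cases a with
  | stay => exact funext fun j ↦ levels_congr fun i _ ↦ hsame (h i)
  | succ j =>
    refine Function.eq_update_iff.2 ⟨?_, fun l hl ↦ levels_congr ?_⟩
    · have hj := h ⟨j, ha⟩
      rw [CertifiesAt, if_pos rfl] at hj
      rw [levels_val Y ⟨j, ha⟩, levels_val X ⟨j, ha⟩]
      exact NextLevel.padicValInt_eq hX hY hXY hj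
    · rintro i rfl
      have hi := h i
      rw [CertifiesAt, if_neg hl] at hi
      exact hsame hi
  | forget j =>
    refine ⟨levels k Y j, Function.eq_update_iff.2 ⟨rfl, fun l hl ↦ levels_congr ?_⟩⟩
    rintro i rfl
    exact hsame (h i hl)
  | zero j =>
    refine ⟨?_, funext fun l ↦ levels_congr fun i _ ↦ hsame (h i).1⟩
    rw [levels_val X ⟨j, ha⟩]
    exact padicValInt_eq_zero_of_residue ((h ⟨j, ha⟩).2 rfl)

theorem isConsistent_ofInt (hX : X ≠ 0) (hY : Y ≠ 0) (hXY : X + Y ≠ 0)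
    (hS : ∀ c ∈ S, c.act.BoundedBy (k + 1)) : (ofInt S k X Y).IsConsistent S where
  digitSum _ := digitSum_ofInt hX hY hXY
  head_mem c hc hcert hbody := .mk hc (fun _ hb ↦ hbody hb)
    (app_of_certifies hX hY hXY (hS c hc) hcert)
  facts_eq hcert := by
    have hlevels : levels k Y = levels k X :=
      app_of_certifies hX hY hXY (a := .stay) trivial hcert
    simp only [ofInt, Label.ofInt, hlevels]

theorem counterRule_ofInt (hX : X ≠ 0) (hY : Y ≠ 0) (hXY : X + Y ≠ 0)
    (hn : ∀ v : ℕ → ℕ, v 0 = n → ¬ Derivable S P v) :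
    (ofInt S k X Y).CounterRule P n (min (levels k X 0) (n + 1)) (min (levels k Y 0) (n + 1)) := by
  have hlevels (N : ℤ) : levels k N 0 = padicValInt (counterPrime (0 : Fin (k + 1))) N :=
    levels_val N 0
  refine ⟨fun h ↦ ?_, fun h ↦ ?_, fun h ↦ ?_, fun h ↦ ?_, fun h ↦ ?_⟩
  · rw [hlevels, padicValInt_eq_zero_of_residue h, Nat.zero_min]
  · rw [hlevels, padicValInt_eq_zero_of_residue h, Nat.zero_min]
  · rw [hlevels, hlevels, SameLevel.padicValInt_eq hX hY h]
  · rw [hlevels, hlevels, NextLevel.padicValInt_eq hX hY hXY h]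
    omega
  · have hne : levels k X 0 ≠ n := fun h0 ↦ hn _ h0 h
    omega

theorem precedes_ofInt (X Y : ℤ) :
    (ofInt S k X Y).Precedes (ofInt S k (X + 2) (Y + 2)) :=
  ⟨fun _ ↦ by simp [ofInt, Label.ofInt, Digits.ofInt],
    fun _ ↦ by simp [ofInt, Label.ofInt, Digits.ofInt]⟩

end Meeting

/-- The correct cell for an integer. -/
noncomputable def Cell.ofInt (S : Set (Clause Q)) (k n : ℕ) (N : ℤ) : Cell Q k :=
  (.ofInt S k N, min (levels k N 0) (n + 1))

theorem isTiling_ofInt (hS : ∀ c ∈ S, c.act.BoundedBy (k + 1))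
    (hn : ∀ v : ℕ → ℕ, v 0 = n → ¬ Derivable S P v) :
    IsTiling (Allowed S P n) (fun x ↦ Cell.ofInt S k n (2 * x + 1))
      (fun x i ↦ .ofInt (counterPrime i) (4 * x + 2)) fun x ↦ Cell.ofInt S k n (2 * x + 1) := by
  intro x t
  have hX : 2 * (x + t) + 1 ≠ 0 := by omega
  have hY : 2 * (x - t) + 1 ≠ 0 := by omega
  have hXY : 2 * (x + t) + 1 + (2 * (x - t) + 1) ≠ 0 := by omega
  beta_reduce
  rw [show 2 * (x + 1 + t) + 1 = 2 * (x + t) + 1 + 2 by ring,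
    show 2 * (x + 1 - t) + 1 = 2 * (x - t) + 1 + 2 by ring,
    show 4 * x + 2 = 2 * (x + t) + 1 + (2 * (x - t) + 1) by ring,
    show 4 * (x + 1) + 2 = 2 * (x + t) + 1 + 2 + (2 * (x - t) + 1 + 2) by ring]
  exact ⟨Meeting.isConsistent_ofInt hX hY hXY hS, Meeting.counterRule_ofInt hX hY hXY hn,
    Meeting.precedes_ofInt _ _⟩

end Existence

section Codes

open Encodable

theorem encode_map_encode {α : Type*} [Encodable α] (l : List α) :
    encode (l.map encode) = encode l := by
  induction l with
  | nil => rfl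
  | cons a l ih => rw [List.map_cons, encode_list_cons, encode_list_cons, ih, encode_nat]

theorem fintypeEquivFin_getElem {α : Type*} [Encodable α] [Fintype α] (i : ℕ)
    (hi : i < (sortedUniv α).length) :
    fintypeEquivFin ((sortedUniv α)[i]) = ⟨i, hi.trans_eq (length_sortedUniv α)⟩ := by
  have val_cast {a b : ℕ} (h : a = b) (j : Fin a) : (Equiv.cast (congrArg Fin h) j : ℕ) = j := by
    subst h
    rfl
  let := decidableEqOfEncodable α
  refine Fin.ext ((val_cast (length_sortedUniv α) _).trans ?_)
  exact congrArg Fin.val (Equiv.symm_apply_apply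
    ((sortedUniv_nodup α).getEquivOfForallMemList _ mem_sortedUniv) ⟨i, hi⟩)

theorem encode_arrow {α β : Type*} [Encodable α] [Fintype α] [Encodable β] (f : α → β) :
    encode f = encode ((sortedUniv α).mapIdx fun i a ↦ Nat.pair i (encode (f a))) := by
  have h : encode f = encode (List.ofFn fun i ↦
      (⟨i, f (fintypeEquivFin.symm i)⟩ : Σ _ : Fin (Fintype.card α), β)) := by
    rw [← List.Vector.toList_ofFn]
    rfl
  rw [h, ← encode_map_encode]
  congr 1
  refine List.ext_getElem (by simp) fun i hi hi' ↦ ?_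
  rw [List.length_mapIdx] at hi'
  rw [List.getElem_map, List.getElem_ofFn, List.getElem_mapIdx, ← fintypeEquivFin_getElem i hi',
    Equiv.symm_apply_apply, fintypeEquivFin_getElem i hi']
  rfl

theorem map_encode_sortedUniv {α : Type*} [Encodable α] [Fintype α] {M : ℕ}
    (hM : ∀ a : α, encode a < M) (p : ℕ → Prop) [DecidablePred p]
    (hp : ∀ c, p c ↔ c ∈ Set.range (encode : α → ℕ)) :
    (sortedUniv α).map encode = (List.range M).filter (p ·) := by
  refine List.Perm.eq_of_sortedLE ?_ (List.sortedLE_iff_pairwise.2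
    ((List.pairwise_lt_range.imp le_of_lt).filter _)) ?_
  · rw [List.sortedLE_iff_pairwise, List.pairwise_map]
    exact Finset.pairwise_sort _ (Encodable.encode' _ ⁻¹'o (· ≤ ·))
  · rw [List.perm_ext_iff_of_nodup ((sortedUniv_nodup α).map encode_injective)
      (List.nodup_range.filter _)]
    intro c
    simp only [List.mem_map, mem_sortedUniv, true_and, List.mem_filter, List.mem_range,
      decide_eq_true_eq, hp, Set.mem_range]
    exact ⟨fun ⟨a, ha⟩ ↦ ⟨ha ▸ hM a, a, ha⟩, fun h ↦ h.2⟩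

theorem primrec_mapIdx {α σ : Type*} [Primcodable α] [Primcodable σ] {f : ℕ → α → σ}
    (hf : Primrec₂ f) : Primrec (List.mapIdx f) := by
  have hstep : Primrec₂ fun (_ : List α) (q : List σ × α) ↦ q.1 ++ [f q.1.length q.2] :=
    (Primrec.list_concat.comp Primrec.fst (hf.comp (Primrec.list_length.comp Primrec.fst)
      Primrec.snd)).comp₂ Primrec₂.right
  refine (Primrec.list_foldl Primrec.id (Primrec.const []) hstep).of_eq fun l ↦ ?_
  induction l using List.reverseRecOn with
  | nil => rfl
  | append_singleton l a ih =>
    simp only [id_eq] at ih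
    simp [List.mapIdx_concat, ih]

theorem pair_le_pair {a a' b b' : ℕ} (ha : a ≤ a') (hb : b ≤ b') :
    Nat.pair a b ≤ Nat.pair a' b' :=
  (StrictMono.monotone (fun _ _ h ↦ Nat.pair_lt_pair_left b h) ha).trans
    (StrictMono.monotone (fun _ _ h ↦ Nat.pair_lt_pair_right a' h) hb)

/-- The local rules on `N + 1` states. -/
abbrev Rule (N : ℕ) : Type := Fin (N + 1) × Fin (N + 1) × Fin (N + 1) → Fin (N + 1)

/-- The three numbers coded by `c` in the encoding of triples. -/
def untriple (c : ℕ) : ℕ × ℕ × ℕ := (c.unpair.1, c.unpair.2.unpair)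

theorem primrec_untriple : Primrec untriple :=
  (Primrec.fst.comp Primrec.unpair).pair
    (Primrec.unpair.comp (Primrec.snd.comp Primrec.unpair))

/-- The codes of triples of states. -/
def IsTripleCode (N c : ℕ) : Prop :=
  (untriple c).1 ≤ N ∧ (untriple c).2.1 ≤ N ∧ (untriple c).2.2 ≤ N

instance (N c : ℕ) : Decidable (IsTripleCode N c) := by unfold IsTripleCode; infer_instance

theorem encode_fin {n : ℕ} (i : Fin n) : encode i = i := rfl

theorem untriple_encode {N : ℕ} (l m r : Fin (N + 1)) :
    untriple (encode (l, m, r)) = (↑l, ↑m, ↑r) := by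
  simp [untriple, encode_fin]

theorem isTripleCode_iff_mem_range {N c : ℕ} : IsTripleCode N c ↔
    c ∈ Set.range (encode : Fin (N + 1) × Fin (N + 1) × Fin (N + 1) → ℕ) := by
  constructor
  · rintro ⟨hl, hm, hr⟩
    exact ⟨(⟨_, Nat.lt_succ_of_le hl⟩, ⟨_, Nat.lt_succ_of_le hm⟩, ⟨_, Nat.lt_succ_of_le hr⟩),
      by simp [untriple, encode_fin]⟩
  · rintro ⟨⟨l, m, r⟩, rfl⟩
    rw [IsTripleCode, untriple_encode]
    exact ⟨Fin.is_le l, Fin.is_le m, Fin.is_le r⟩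

theorem primrecRel_isTripleCode : PrimrecRel IsTripleCode := by
  have h : Primrec fun q : ℕ × ℕ ↦ untriple q.2 := primrec_untriple.comp Primrec.snd
  exact (Primrec.nat_le.comp (Primrec.fst.comp h) Primrec.fst).and
    ((Primrec.nat_le.comp (Primrec.fst.comp (Primrec.snd.comp h)) Primrec.fst).and
      (Primrec.nat_le.comp (Primrec.snd.comp (Primrec.snd.comp h)) Primrec.fst))

theorem encode_rule {N : ℕ} (f : Rule N) {G : ℕ → ℕ} (hG : ∀ t, (f t : ℕ) = G (encode t)) :
    encode f = encode ((((List.range (Nat.pair N (Nat.pair N N) + 1)).filter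
      (IsTripleCode N ·)).map G).mapIdx Nat.pair) := by
  have hlt (t : Fin (N + 1) × Fin (N + 1) × Fin (N + 1)) :
      encode t < Nat.pair N (Nat.pair N N) + 1 :=
    Nat.lt_succ_of_le (pair_le_pair t.1.is_le (pair_le_pair t.2.1.is_le t.2.2.is_le))
  rw [encode_arrow, ← map_encode_sortedUniv hlt _ fun _ ↦ isTripleCode_iff_mem_range]
  congr 1
  refine List.ext_getElem (by simp) fun i _ _ ↦ ?_
  simp only [List.getElem_mapIdx, List.getElem_map, ← hG, encode_fin]

theorem primrec_encode_sigma_rule {N : ℕ → ℕ} (hN : Primrec N) {f : ∀ n, Rule (N n)}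
    {G : ℕ → ℕ → ℕ} (hG : Primrec₂ G) (h : ∀ n t, (f n t : ℕ) = G n (encode t)) :
    Primrec fun n ↦ encode (⟨N n, f n⟩ : Σ N, Rule N) := by
  have hrange : Primrec fun n ↦ List.range (Nat.pair (N n) (Nat.pair (N n) (N n)) + 1) :=
    Primrec.list_range.comp (Primrec.succ.comp
      (Primrec₂.natPair.comp hN (Primrec₂.natPair.comp hN hN)))
  have hvalues : Primrec₂ fun n c ↦ if IsTripleCode (N n) c then some (G n c) else none :=
    Primrec.ite (primrecRel_isTripleCode.comp (hN.comp Primrec.fst) Primrec.snd)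
      (Primrec.option_some.comp hG) (Primrec.const none)
  refine (Primrec₂.natPair.comp hN (Primrec.encode.comp ((primrec_mapIdx Primrec₂.natPair).comp
    (Primrec.listFilterMap hrange hvalues)))).of_eq fun n ↦ ?_
  rw [encode_sigma_val, encode_nat, encode_rule (f n) (h n), ← List.filterMap_eq_map,
    List.filterMap_filter]
  simp only [decide_eq_true_eq, Function.comp_apply]

end Codes

section PartialRules

open Encodable

variable {σ : Type*}

/-- The live state with code `c`; the code of the blank state is `0 = encode none`. -/
def liveState [Encodable σ] (c : ℕ) : Option σ := (decode c : Option (Option σ)).join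

theorem liveState_encode_some [Encodable σ] (s : σ) : liveState (encode (some s)) = some s := by
  rw [liveState, encodek, Option.join_some]

theorem liveState_zero [Encodable σ] : (liveState 0 : Option σ) = none := by
  rw [liveState, ← encode_none (α := σ), encodek, Option.join_some]

/-- A partial local rule, undefined values being blank, as a function on the codes of triples. -/
def codedStep [Encodable σ] (step : σ → σ → σ → Option σ) (c : ℕ) : ℕ :=
  encode ((liveState (untriple c).1).bind fun l ↦ (liveState (untriple c).2.1).bind fun m ↦
    (liveState (untriple c).2.2).bind fun r ↦ step l m r)

/-- The cellular automaton of a partial local rule; states with a code above `N` become blank. -/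
def codedRule [Encodable σ] (N : ℕ) (step : σ → σ → σ → Option σ) : Rule N := fun t ↦
  Fin.ofNat (N + 1) (if codedStep step (encode t) ≤ N then codedStep step (encode t) else 0)

/-- Space-time diagrams of a partial local rule. -/
def IsDiagram (step : σ → σ → σ → Option σ) (X : ℕ → ℤ → σ) : Prop :=
  ∀ t i, step (X t (i - 1)) (X t i) (X t (i + 1)) = some (X (t + 1) i)

theorem codedRule_val [Encodable σ] {N : ℕ} (step : σ → σ → σ → Option σ)
    (t : Fin (N + 1) × Fin (N + 1) × Fin (N + 1)) : (codedRule N step t : ℕ) =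
      if codedStep step (encode t) ≤ N then codedStep step (encode t) else 0 := by
  refine Nat.mod_eq_of_lt (Nat.lt_succ_of_le ?_)
  split_ifs with h
  exacts [h, Nat.zero_le N]

variable [Encodable σ] {N : ℕ} {step : σ → σ → σ → Option σ}

theorem exists_of_codedRule_ne_zero {l m r : Fin (N + 1)} (h : codedRule N step (l, m, r) ≠ 0) :
    ∃ a b c s, liveState l = some a ∧ liveState m = some b ∧ liveState r = some c ∧
      step a b c = some s ∧ liveState (codedRule N step (l, m, r)) = some s := by
  have hval := codedRule_val step (l, m, r)
  have hne : (codedRule N step (l, m, r) : ℕ) ≠ 0 := fun h0 ↦ h (Fin.ext h0)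
  have hle : codedStep step (encode (l, m, r)) ≤ N := by
    by_contra hN
    exact hne (hval.trans (if_neg hN))
  rw [if_pos hle] at hval
  rw [hval] at hne ⊢
  rw [codedStep, untriple_encode] at hne ⊢
  obtain ⟨s, hs⟩ := Option.ne_none_iff_exists'.1 fun h0 ↦
    hne ((congrArg encode h0).trans encode_none)
  rw [hs, liveState_encode_some]
  obtain ⟨a, ha, hs⟩ := Option.bind_eq_some_iff.1 hs
  obtain ⟨b, hb, hs⟩ := Option.bind_eq_some_iff.1 hs
  obtain ⟨c, hc, hs⟩ := Option.bind_eq_some_iff.1 hs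
  exact ⟨a, b, c, s, ha, hb, hc, hs, rfl⟩

theorem hasSpreadingBlank_codedRule (N : ℕ) (step : σ → σ → σ → Option σ) :
    HasSpreadingBlank (codedRule N step) := by
  intro l m r h0
  by_contra h
  obtain ⟨a, b, c, -, hl, hm, hr, -⟩ := exists_of_codedRule_ne_zero h
  have hzero : (liveState ((0 : Fin (N + 1)) : ℕ) : Option σ) = none := liveState_zero
  rcases h0 with rfl | rfl | rfl <;> simp_all only [reduceCtorEq]

theorem codedRule_eq_of_step {l m r : Fin (N + 1)} {a b c s : σ} (hl : (l : ℕ) = encode (some a))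
    (hm : (m : ℕ) = encode (some b)) (hr : (r : ℕ) = encode (some c)) (hs : step a b c = some s)
    (hN : encode (some s) ≤ N) : (codedRule N step (l, m, r) : ℕ) = encode (some s) := by
  have hcode : codedStep step (encode (l, m, r)) = encode (some s) := by
    simp only [codedStep, untriple_encode, hl, hm, hr, liveState_encode_some, Option.bind_some, hs]
  rw [codedRule_val, hcode, if_pos hN]

theorem iterate_caOfRule_succ (f : Rule N) (x : ℤ → Fin (N + 1)) (t : ℕ) (i : ℤ) :
    (caOfRule f)^[t + 1] x i = f ((caOfRule f)^[t] x (i - 1), (caOfRule f)^[t] x i,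
      (caOfRule f)^[t] x (i + 1)) := by
  rw [Function.iterate_succ_apply', caOfRule]

theorem IsImmortal.exists_isDiagram {x : ℤ → Fin (N + 1)} (hx : IsImmortal (codedRule N step) x) :
    ∃ X, IsDiagram step X := by
  have hstep (t : ℕ) (i : ℤ) :=
    exists_of_codedRule_ne_zero (iterate_caOfRule_succ _ x t i ▸ hx (t + 1) i)
  have hlive (t : ℕ) (i : ℤ) :
      ∃ s : σ, liveState ((caOfRule (codedRule N step))^[t] x i) = some s :=
    let ⟨_, b, _, _, _, hb, _⟩ := hstep t i
    ⟨b, hb⟩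
  choose X hX using hlive
  refine ⟨X, fun t i ↦ ?_⟩
  obtain ⟨a, b, c, s, ha, hb, hc, hs, hout⟩ := hstep t i
  rw [← iterate_caOfRule_succ (codedRule N step)] at hout
  rwa [Option.some_inj.1 ((hX _ _).symm.trans ha), Option.some_inj.1 ((hX _ _).symm.trans hb),
    Option.some_inj.1 ((hX _ _).symm.trans hc), Option.some_inj.1 ((hX _ _).symm.trans hout)]

theorem IsDiagram.exists_isImmortal {X : ℕ → ℤ → σ} (hX : IsDiagram step X)
    (hN : ∀ t i, encode (some (X t i)) ≤ N) : ∃ x, IsImmortal (codedRule N step) x := by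
  let x (i : ℤ) : Fin (N + 1) := ⟨encode (some (X 0 i)), Nat.lt_succ_of_le (hN 0 i)⟩
  have hx (t : ℕ) : ∀ i, ((caOfRule (codedRule N step))^[t] x i : ℕ) = encode (some (X t i)) := by
    induction t with
    | zero => exact fun i ↦ rfl
    | succ t ih =>
      intro i
      rw [iterate_caOfRule_succ]
      exact codedRule_eq_of_step (ih _) (ih _) (ih _) (hX t i) (hN _ _)
  refine ⟨x, fun t i h0 ↦ ?_⟩
  have hzero : 0 = encode (some (X t i)) := by rw [← hx, h0, Fin.val_zero]
  rw [encode_some] at hzero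
  exact absurd hzero.symm (Nat.succ_ne_zero _)

theorem primrec_liveState {σ : Type*} [Primcodable σ] :
    Primrec (liveState : ℕ → Option σ) :=
  (Primrec.option_bind Primrec.decode Primrec₂.right).of_eq fun _ ↦ Option.bind_id_eq_join

theorem primrec_codedStep {σ : Type*} [Primcodable σ] {step : ℕ → σ → σ → σ → Option σ}
    (hstep : Primrec fun q : ℕ × σ × σ × σ ↦ step q.1 q.2.1 q.2.2.1 q.2.2.2) :
    Primrec₂ fun n c ↦ codedStep (step n) c := by
  have hcode : Primrec fun q : ℕ × ℕ ↦ untriple q.2 := primrec_untriple.comp Primrec.snd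
  have hl := primrec_liveState (σ := σ).comp (Primrec.fst.comp hcode)
  have hm := primrec_liveState (σ := σ).comp (Primrec.fst.comp (Primrec.snd.comp hcode))
  have hr := primrec_liveState (σ := σ).comp (Primrec.snd.comp (Primrec.snd.comp hcode))
  have hbind₃ : Primrec₂ fun (q : ((ℕ × ℕ) × σ) × σ) r ↦ step q.1.1.1 q.1.2 q.2 r := by
    have hfst₁ : Primrec fun q : (((ℕ × ℕ) × σ) × σ) × σ ↦ q.1 := Primrec.fst
    have hfst₂ : Primrec fun q : (((ℕ × ℕ) × σ) × σ) × σ ↦ q.1.1 := Primrec.fst.comp hfst₁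
    exact hstep.comp ((Primrec.fst.comp (Primrec.fst.comp hfst₂)).pair
      ((Primrec.snd.comp hfst₂).pair ((Primrec.snd.comp hfst₁).pair Primrec.snd)))
  have hbind₂ : Primrec₂ fun (q : (ℕ × ℕ) × σ) m ↦
      (liveState (untriple q.1.2).2.2).bind (step q.1.1 q.2 m) :=
    Primrec.option_bind (hr.comp (Primrec.fst.comp Primrec.fst)) hbind₃
  have hbind₁ : Primrec₂ fun (q : ℕ × ℕ) l ↦ (liveState (untriple q.2).2.1).bind fun m ↦
      (liveState (untriple q.2).2.2).bind (step q.1 l m) :=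
    Primrec.option_bind (hm.comp Primrec.fst) hbind₂
  exact Primrec.encode.comp (Primrec.option_bind hl hbind₁)

theorem primrec_encode_codedRule {σ : Type*} [Primcodable σ] {N : ℕ → ℕ} (hN : Primrec N)
    {step : ℕ → σ → σ → σ → Option σ}
    (hstep : Primrec fun q : ℕ × σ × σ × σ ↦ step q.1 q.2.1 q.2.2.1 q.2.2.2) :
    Primrec fun n ↦ encode (⟨N n, codedRule (N n) (step n)⟩ : Σ N, Rule N) := by
  have hcode : Primrec fun q : ℕ × ℕ ↦ codedStep (step q.1) q.2 := primrec_codedStep hstep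
  refine primrec_encode_sigma_rule hN (G := fun n c ↦
    if codedStep (step n) c ≤ N n then codedStep (step n) c else 0) ?_
    fun n ↦ codedRule_val (step n)
  exact Primrec.ite (Primrec.nat_le.comp hcode (hN.comp Primrec.fst)) hcode (Primrec.const 0)

end PartialRules

section Automaton

open Encodable

open Classical in
/-- The partial local rule that moves the first component to the left and the last one to the right,
and is defined where the neighbours satisfy `r`. -/
noncomputable def shiftStep {α β γ : Type*} (r : α × β × γ → α × β × γ → Prop)
    (a b c : α × β × γ) : Option (α × β × γ) :=
  if r b c then some (c.1, b.2.1, a.2.2) else none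

theorem isDiagram_shiftStep {α β γ : Type*} {r : α × β × γ → α × β × γ → Prop}
    {X : ℕ → ℤ → α × β × γ} : IsDiagram (shiftStep r) X ↔ ∀ t i, r (X t i) (X t (i + 1)) ∧
      X (t + 1) i = ((X t (i + 1)).1, (X t i).2.1, (X t (i - 1)).2.2) := by
  refine forall₂_congr fun t i ↦ ?_
  rw [shiftStep, Option.ite_none_right_eq_some, Option.some_inj, eq_comm (b := X (t + 1) i)]

theorem IsDiagram.exists_isTiling {α β γ : Type*} {r : α × β × γ → α × β × γ → Prop}
    {X : ℕ → ℤ → α × β × γ} (h : IsDiagram (shiftStep r) X) : ∃ A B C, IsTiling r A B C := by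
  rw [isDiagram_shiftStep] at h
  have hX (t : ℕ) : ∀ x : ℤ, X t x = ((X 0 (x + t)).1, (X 0 x).2.1, (X 0 (x - t)).2.2) := by
    induction t with
    | zero => simp
    | succ t ih =>
      intro x
      rw [(h t x).2, ih, ih, ih, Nat.cast_succ, add_right_comm, sub_right_comm, add_assoc, sub_sub]
  refine ⟨fun x ↦ (X 0 x).1, fun x ↦ (X 0 x).2.1, fun x ↦ (X 0 x).2.2, fun x t ↦ ?_⟩
  rw [← hX, ← hX]
  exact (h t x).1

theorem IsTiling.isDiagram {α β γ : Type*} {r : α × β × γ → α × β × γ → Prop} {A : ℤ → α}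
    {B : ℤ → β} {C : ℤ → γ} (h : IsTiling r A B C) :
    IsDiagram (shiftStep r) fun t x ↦ (A (x + t), B x, C (x - t)) := by
  refine isDiagram_shiftStep.2 fun t x ↦ ⟨h x t, ?_⟩
  rw [Nat.cast_succ, add_right_comm, sub_right_comm, add_assoc, sub_sub]

/-- A primitive recursive encoding of a finite type. -/
noncomputable abbrev primcodableOfFinite (α : Type*) [Finite α] : Primcodable α :=
  .ofEquiv (Fin (Nat.card α)) (Finite.equivFin α)

theorem primrecPred_of_finite {α : Type*} [Primcodable α] [Finite α] (p : α → Prop) :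
    PrimrecPred p := by
  classical
  exact Primrec.primrecPred (Primrec.dom_finite fun a ↦ decide (p a))

theorem exists_encode_le (α : Type*) [Encodable α] [Finite α] : ∃ K, ∀ a : α, encode a ≤ K :=
  let ⟨K, hK⟩ := (Set.finite_range (encode : α → ℕ)).bddAbove
  ⟨K, fun a ↦ hK ⟨a, rfl⟩⟩

instance {p : ℕ} [NeZero p] : Finite (Digits p) :=
  .of_injective (fun d ↦ (d.residue, d.unit)) fun _ _ h ↦
    Digits.ext (congrArg Prod.fst h) (congrArg Prod.snd h)

variable {Q : Type} [Finite Q] {k : ℕ}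

instance : Finite (Label Q k) :=
  .of_injective (fun l ↦ (l.digits, l.facts)) fun _ _ h ↦
    Label.ext (congrArg Prod.fst h) (congrArg Prod.snd h)

instance : Finite (Meeting Q k) :=
  .of_injective (fun m ↦ (m.left, m.sum, m.right)) fun _ _ h ↦
    Meeting.ext (congrArg Prod.fst h) (congrArg (·.2.1) h) (congrArg (·.2.2) h)

noncomputable instance : Primcodable (DigitVector k) := primcodableOfFinite _

noncomputable instance : Primcodable (Label Q k) := primcodableOfFinite _

noncomputable instance : Primcodable (Meeting Q k) := primcodableOfFinite _

theorem primrec_meeting : Primrec (State.meeting : State Q k → Meeting Q k) :=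
  (Primrec.dom_finite fun m : Label Q k × DigitVector k × Label Q k ↦
    (⟨m.1, m.2.1, m.2.2⟩ : Meeting Q k)).comp ((Primrec.fst.comp Primrec.fst).pair
      ((Primrec.fst.comp Primrec.snd).pair (Primrec.fst.comp (Primrec.snd.comp Primrec.snd))))

theorem primrecPred_counterRule (P : Q) : PrimrecPred fun q : ℕ × State Q k ↦
    q.2.meeting.CounterRule P q.1 q.2.1.2 q.2.2.2.2 := by
  have htest (T : Meeting Q k → Prop) : PrimrecPred fun q : ℕ × State Q k ↦ T q.2.meeting :=
    (primrecPred_of_finite T).comp (primrec_meeting.comp Primrec.snd)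
  have ha : Primrec fun q : ℕ × State Q k ↦ q.2.1.2 :=
    Primrec.snd.comp (Primrec.fst.comp Primrec.snd)
  have hc : Primrec fun q : ℕ × State Q k ↦ q.2.2.2.2 :=
    Primrec.snd.comp (Primrec.snd.comp (Primrec.snd.comp Primrec.snd))
  have hcap : Primrec fun q : ℕ × State Q k ↦ min (q.2.1.2 + 1) (q.1 + 1) :=
    Primrec.nat_min.comp (Primrec.succ.comp ha) (Primrec.succ.comp Primrec.fst)
  have hleft := htest fun m ↦ firstDigit _ (m.left.digits 0).residue ≠ 0
  have hright := htest fun m ↦ firstDigit _ (m.right.digits 0).residue ≠ 0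
  have hsame := htest fun m ↦
    SameLevel (m.left.digits 0).unit (m.right.digits 0).unit (m.sum 0).unit
  have hnext := htest fun m ↦
    NextLevel (m.left.digits 0).unit (m.right.digits 0).unit (m.sum 0).unit
  have hgoal := htest fun m ↦ P ∈ m.left.facts
  refine ((hleft.not.or (Primrec.eq.comp ha (Primrec.const 0))).and
    ((hright.not.or (Primrec.eq.comp hc (Primrec.const 0))).and
    ((hsame.not.or (Primrec.eq.comp ha hc)).and
    ((hnext.not.or (Primrec.eq.comp hc hcap)).and
    (hgoal.not.or (Primrec.eq.comp ha Primrec.fst).not))))).of_eq fun q ↦ ?_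
  simp only [← imp_iff_not_or]
  exact ⟨fun ⟨h₁, h₂, h₃, h₄, h₅⟩ ↦ ⟨h₁, h₂, h₃, h₄, h₅⟩,
    fun ⟨h₁, h₂, h₃, h₄, h₅⟩ ↦ ⟨h₁, h₂, h₃, h₄, h₅⟩⟩

theorem primrecPred_allowed (S : Set (Clause Q)) (P : Q) :
    PrimrecPred fun q : ℕ × State Q k × State Q k ↦ Allowed S P q.1 q.2.1 q.2.2 := by
  have hs : Primrec fun q : ℕ × State Q k × State Q k ↦ q.2.1 := Primrec.fst.comp Primrec.snd
  have ht : Primrec fun q : ℕ × State Q k × State Q k ↦ q.2.2 := Primrec.snd.comp Primrec.snd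
  have hprecedes := primrecPred_of_finite fun m : Meeting Q k × Meeting Q k ↦ m.1.Precedes m.2
  refine (((primrecPred_of_finite (Meeting.IsConsistent S)).comp (primrec_meeting.comp hs)).and
    (((primrecPred_counterRule P).comp (Primrec.fst.pair hs)).and (hprecedes.comp
      ((primrec_meeting.comp hs).pair (primrec_meeting.comp ht))))).of_eq fun q ↦ ?_
  exact ⟨fun ⟨h₁, h₂, h₃⟩ ↦ ⟨h₁, h₂, h₃⟩, fun ⟨h₁, h₂, h₃⟩ ↦ ⟨h₁, h₂, h₃⟩⟩

theorem primrec_shiftStep_allowed (S : Set (Clause Q)) (P : Q) :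
    Primrec fun q : ℕ × State Q k × State Q k × State Q k ↦
      shiftStep (Allowed S P q.1) q.2.1 q.2.2.1 q.2.2.2 := by
  classical
  have ha : Primrec fun q : ℕ × State Q k × State Q k × State Q k ↦ q.2.1 :=
    Primrec.fst.comp Primrec.snd
  have hbc : Primrec fun q : ℕ × State Q k × State Q k × State Q k ↦ q.2.2 :=
    Primrec.snd.comp Primrec.snd
  exact Primrec.ite ((primrecPred_allowed S P).comp (Primrec.fst.pair hbc))
    (Primrec.option_some.comp ((Primrec.fst.comp (Primrec.snd.comp hbc)).pair
      ((Primrec.fst.comp (Primrec.snd.comp (Primrec.fst.comp hbc))).pair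
        (Primrec.snd.comp (Primrec.snd.comp ha))))) (Primrec.const none)

theorem exists_primrec_encode_state_le (Q : Type) [Finite Q] (k : ℕ) : ∃ N : ℕ → ℕ, Primrec N ∧
    ∀ (n : ℕ) (s : State Q k), s.1.2 ≤ n + 1 → s.2.2.2 ≤ n + 1 → encode (some s) ≤ N n := by
  obtain ⟨K, hK⟩ := exists_encode_le (Label Q k)
  obtain ⟨L, hL⟩ := exists_encode_le (DigitVector k)
  have hcell : Primrec fun n ↦ Nat.pair K (n + 1) :=
    Primrec₂.natPair.comp (Primrec.const K) Primrec.succ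
  refine ⟨fun n ↦ Nat.pair (Nat.pair K (n + 1)) (Nat.pair L (Nat.pair K (n + 1))) + 1,
    Primrec.succ.comp (Primrec₂.natPair.comp hcell (Primrec₂.natPair.comp (Primrec.const L) hcell)),
    fun n s hA hC ↦ Nat.succ_le_succ ?_⟩
  exact pair_le_pair (pair_le_pair (hK _) hA) (pair_le_pair (hL _) (pair_le_pair (hK _) hC))

theorem exists_isImmortal_iff {S : Set (Clause Q)} (hS : ∀ c ∈ S, c.act.BoundedBy (k + 1)) {P : Q}
    {n N : ℕ} (hN : ∀ s : State Q k, s.1.2 ≤ n + 1 → s.2.2.2 ≤ n + 1 → encode (some s) ≤ N) :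
    (∃ x, IsImmortal (codedRule N (shiftStep (Allowed (k := k) S P n))) x) ↔
      ¬ ∃ v : ℕ → ℕ, v 0 = n ∧ Derivable S P v := by
  constructor
  · rintro ⟨x, hx⟩ ⟨v, hv, hP⟩
    obtain ⟨X, hX⟩ := hx.exists_isDiagram
    obtain ⟨A, B, C, hABC⟩ := hX.exists_isTiling
    exact hABC.meetingTracks.not_derivable hv hP
  · intro hn
    have htiling := isTiling_ofInt hS fun v hv hP ↦ hn ⟨v, hv, hP⟩
    exact htiling.isDiagram.exists_isImmortal fun t i ↦
      hN _ (min_le_right _ _) (min_le_right _ _)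

end Automaton

end CellularAutomaton

open CellularAutomaton in
theorem uniquelyErgodic_undecidable_general :
    ¬ ∃ g : ℕ → Bool, Computable g ∧
      ∀ (n : ℕ) (f : Fin (n + 1) × Fin (n + 1) × Fin (n + 1) → Fin (n + 1)),
        HasSpreadingBlank f →
        (g (Encodable.encode
            (⟨n, f⟩ : Σ n : ℕ, (Fin (n + 1) × Fin (n + 1) × Fin (n + 1) → Fin (n + 1))))
            = true ↔
          (∃! μ : Measure (ℤ → Fin (n + 1)), IsProbabilityMeasure μ ∧
            ∀ A : Set (ℤ → Fin (n + 1)), MeasurableSet A →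
              μ (caOfRule f ⁻¹' A) = μ A)) := by
  rintro ⟨g, hg, hgf⟩
  obtain ⟨Q, _, S, k, P, hS, hhalt⟩ := exists_horn_system_halting
  obtain ⟨N, hN, hbound⟩ := exists_primrec_encode_state_le Q k
  let rule (n : ℕ) : Rule (N n) := codedRule (N n) (shiftStep (Allowed (k := k) S P n))
  have hcode : Primrec fun n ↦ Encodable.encode (⟨N n, rule n⟩ : Σ N, Rule N) :=
    primrec_encode_codedRule hN (primrec_shiftStep_allowed S P)
  have hdecides (c : Nat.Partrec.Code) : (c.eval 0).Dom ↔ g (Encodable.encode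
      (⟨N (Encodable.encode c), rule (Encodable.encode c)⟩ : Σ N, Rule N)) = true := by
    have hblank := hasSpreadingBlank_codedRule (N (Encodable.encode c))
      (shiftStep (Allowed (k := k) S P (Encodable.encode c)))
    rw [hgf _ _ hblank, hblank.uniquelyErgodic_iff, exists_isImmortal_iff hS (hbound _), not_not,
      hhalt]
  exact ComputablePred.halting_problem 0 (ComputablePred.computable_iff.2
    ⟨_, hg.comp (hcode.to_comp.comp Computable.encode), funext fun c ↦ propext (hdecides c)⟩)

/-- Unique ergodicity of cellular automata is undecidable: there is no
total computable function `g` from (the effective encoding of) codes `(n, f)` of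
radius-1 cellular automata to `Bool` such that `g (n, f) = true` iff `Φ_{n,f}` is
uniquely ergodic. -/
theorem uniquelyErgodic_undecidable :
    ¬ ∃ g : ℕ → Bool, Computable g ∧
      ∀ (n : ℕ) (f : Fin (n + 1) × Fin (n + 1) × Fin (n + 1) → Fin (n + 1)),
        f (0, 0, 0) = 0 →
        (g (Encodable.encode
            (⟨n, f⟩ : Σ n : ℕ, (Fin (n + 1) × Fin (n + 1) × Fin (n + 1) → Fin (n + 1))))
            = true ↔
          (∃! μ : Measure (ℤ → Fin (n + 1)), IsProbabilityMeasure μ ∧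
            ∀ A : Set (ℤ → Fin (n + 1)), MeasurableSet A →
              μ (caOfRule f ⁻¹' A) = μ A)) :=
  fun ⟨g, hg, h⟩ ↦ uniquelyErgodic_undecidable_general
    ⟨g, hg, fun n f hf ↦ h n f (hf 0 0 0 (Or.inl rfl))⟩
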